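/- arXiv:1111.1041 — 2 statements merged into one kernel-verified Lean document; each statement's English description precedes it below -/
import Mathlib

section
/- Let r(N) = E ‖η^mono(Z)‖₂², where η^mono is the Euclidean projection of ℝ^N onto the monotone cone M_N = {x ∈ ℝ^N : x_t ≤ x_{t+1} for all 1 ≤ t ≤ N−1} and Z ∼ N(0, I_N). Then r(1) = 1; for every N ≥ 10, r(N) ≤ 20 (log N)²; and for every N ≥ 1, r(N) < 2N(log N + 1). Here log denotes the natural logarithm. -/
open MeasureTheory ProbabilityTheory ENNReal

noncomputable section

/-- The standard Gaussian measure `N(0, I_N)` on `ℝ^N`. -/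
def stdGaussian (N : ℕ) : Measure (Fin N → ℝ) :=
  Measure.pi fun _ => gaussianReal 0 1

/-- The cone `M_N` of nondecreasing sequences in `ℝ^N`. -/
def monoCone (N : ℕ) : Set (Fin N → ℝ) := {x | Monotone x}

section
variable (η : ∀ ℓ : ℕ, (Fin ℓ → ℝ) → (Fin ℓ → ℝ))

/-- The risk at zero of monotone regression in dimension `N`,
`r(N) = E ‖η^mono(Z)‖₂²`, `Z ∼ N(0, I_N)`. -/
def riskAtZero (N : ℕ) : ℝ≥0∞ :=
  ∫⁻ z, ENNReal.ofReal (∑ i, (η N z i) ^ 2) ∂(stdGaussian N)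

end

/-- First-order condition of the projection along a feasible direction. -/
lemma proj_dir {N : ℕ} (y p d : Fin N → ℝ)
    (hmin : ∀ x ∈ monoCone N, (∑ i, (y i - p i) ^ 2) ≤ ∑ i, (y i - x i) ^ 2)
    (δ : ℝ) (hδ : 0 < δ)
    (hd : ∀ ε, 0 < ε → ε ≤ δ → Monotone (fun i => p i + ε * d i)) :
    ∑ i, (y i - p i) * d i ≤ 0 := by
  by_contra! hpos
  set s := ∑ i, (y i - p i) * d i with hs
  set D := ∑ i, d i ^ 2 with hD
  have hD0 : 0 ≤ D := Finset.sum_nonneg fun i _ => sq_nonneg _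
  set ε := min δ (s / (D + 1)) with hε
  have hε0 : 0 < ε := lt_min hδ (by positivity)
  have h1 := hmin _ (hd ε hε0 (min_le_left _ _))
  have h2 : ∑ i, (y i - (p i + ε * d i)) ^ 2
      = ∑ i, (y i - p i) ^ 2 - 2 * ε * s + ε ^ 2 * D := by
    rw [hs, hD, Finset.mul_sum, Finset.mul_sum, ← Finset.sum_sub_distrib,
      ← Finset.sum_add_distrib]
    exact Finset.sum_congr rfl fun i _ => by ring
  have h3 : ε * (D + 1) ≤ s := by
    have := min_le_right δ (s / (D + 1))
    rwa [← hε, le_div_iff₀ (by positivity)] at this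
  rw [h2] at h1
  have h4 : ε * (2 * s) ≤ ε * (ε * D) := by linarith
  have h5 := le_of_mul_le_mul_left h4 hε0
  nlinarith

/-- The projection does not increase the norm. -/
lemma proj_norm {N : ℕ} (y p : Fin N → ℝ) (hp : Monotone p)
    (hmin : ∀ x ∈ monoCone N, (∑ i, (y i - p i) ^ 2) ≤ ∑ i, (y i - x i) ^ 2) :
    ∑ i, p i ^ 2 ≤ ∑ i, y i ^ 2 := by
  have h := proj_dir y p (fun i => - p i) hmin 1 one_pos (by
    intro ε h0 h1 i j hij
    have := hp hij
    simp only
    nlinarith)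
  have : ∑ i, p i ^ 2 ≤ ∑ i, (y i ^ 2 + 2 * ((y i - p i) * - p i)) :=
    Finset.sum_le_sum fun i _ => by nlinarith [sq_nonneg (y i - p i)]
  rw [Finset.sum_add_distrib, ← Finset.mul_sum] at this
  linarith

/-- Upper half of the min-max formula. -/
lemma proj_upper {N : ℕ} (y p : Fin N → ℝ) (hp : Monotone p)
    (hmin : ∀ x ∈ monoCone N, (∑ i, (y i - p i) ^ 2) ≤ ∑ i, (y i - x i) ^ 2) (t : Fin N) :
    ∃ a ≤ t, ((Finset.Ici a).card : ℝ) * p t ≤ ∑ i ∈ Finset.Ici a, y i := by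
  classical
  have hne : (Finset.univ.filter fun s => p s = p t).Nonempty := ⟨t, by simp⟩
  set a := (Finset.univ.filter fun s => p s = p t).min' hne with ha
  have hat : p a = p t := by
    have := Finset.min'_mem _ hne
    rw [← ha] at this
    simpa using this
  have hale : a ≤ t := Finset.min'_le _ _ (by simp)
  have hlt : ∀ s, s < a → p s < p a := by
    intro s hs
    refine lt_of_le_of_ne (hp hs.le) fun h => ?_
    exact absurd (Finset.min'_le (Finset.univ.filter fun s => p s = p t) s
      (by simp [h, hat])) (not_le.mpr hs)
  obtain ⟨δ, hδ, hgap⟩ : ∃ δ > 0, ∀ s, s < a → p s + δ ≤ p a := by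
    rcases (Finset.Iio a).eq_empty_or_nonempty with h | h
    · refine ⟨1, one_pos, fun s hs => ?_⟩
      have : s ∈ Finset.Iio a := by simpa using hs
      simp [h] at this
    · obtain ⟨m, hm, hmax⟩ := Finset.exists_max_image _ p h
      refine ⟨p a - p m, sub_pos.mpr (hlt m (by simpa using hm)), fun s hs => ?_⟩
      have := hmax s (by simpa using hs)
      linarith
  refine ⟨a, hale, ?_⟩
  have h := proj_dir y p (fun i => if a ≤ i then -1 else 0) hmin δ hδ (by
    intro ε h0 h1 i j hij
    have hm := hp hij
    simp only
    split_ifs with h2 h3 h3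
    · linarith
    · exact absurd (h2.trans hij) h3
    · have := hgap i (not_le.mp h2)
      have := hp h3
      linarith
    · linarith)
  have h' : ∑ i, (y i - p i) * (if a ≤ i then (-1 : ℝ) else 0)
      = ∑ i ∈ Finset.Ici a, (p i - y i) := by
    rw [← Finset.filter_le_eq_Ici, Finset.sum_filter]
    exact Finset.sum_congr rfl fun i _ => by split_ifs <;> ring
  rw [h', Finset.sum_sub_distrib] at h
  have h2 : (Finset.Ici a).card • p t ≤ ∑ i ∈ Finset.Ici a, p i :=
    Finset.card_nsmul_le_sum _ _ _ fun i hi => by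
      rw [← hat]; exact hp (by simpa using hi)
  rw [nsmul_eq_mul] at h2
  linarith

/-- Lower half of the min-max formula. -/
lemma proj_lower {N : ℕ} (y p : Fin N → ℝ) (hp : Monotone p)
    (hmin : ∀ x ∈ monoCone N, (∑ i, (y i - p i) ^ 2) ≤ ∑ i, (y i - x i) ^ 2) (t : Fin N) :
    ∃ b ≥ t, ∑ i ∈ Finset.Iic b, y i ≤ ((Finset.Iic b).card : ℝ) * p t := by
  classical
  have hne : (Finset.univ.filter fun s => p s = p t).Nonempty := ⟨t, by simp⟩
  set a := (Finset.univ.filter fun s => p s = p t).max' hne with ha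
  have hat : p a = p t := by
    have := Finset.max'_mem _ hne
    rw [← ha] at this
    simpa using this
  have hale : t ≤ a := Finset.le_max' _ _ (by simp)
  have hlt : ∀ s, a < s → p a < p s := by
    intro s hs
    refine lt_of_le_of_ne (hp hs.le) fun h => ?_
    exact absurd (Finset.le_max' (Finset.univ.filter fun s => p s = p t) s
      (by simp [← h, hat])) (not_le.mpr hs)
  obtain ⟨δ, hδ, hgap⟩ : ∃ δ > 0, ∀ s, a < s → p a + δ ≤ p s := by
    rcases (Finset.Ioi a).eq_empty_or_nonempty with h | h
    · refine ⟨1, one_pos, fun s hs => ?_⟩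
      have : s ∈ Finset.Ioi a := by simpa using hs
      simp [h] at this
    · obtain ⟨m, hm, hmax⟩ := Finset.exists_min_image _ p h
      refine ⟨p m - p a, sub_pos.mpr (hlt m (by simpa using hm)), fun s hs => ?_⟩
      have := hmax s (by simpa using hs)
      linarith
  refine ⟨a, hale, ?_⟩
  have h := proj_dir y p (fun i => if i ≤ a then 1 else 0) hmin δ hδ (by
    intro ε h0 h1 i j hij
    have hm := hp hij
    simp only
    split_ifs with h2 h3 h3
    · linarith
    · have := hgap j (not_le.mp h3)
      have := hp h2
      linarith
    · exact absurd (hij.trans h3) h2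
    · linarith)
  have h' : ∑ i, (y i - p i) * (if i ≤ a then (1 : ℝ) else 0)
      = ∑ i ∈ Finset.Iic a, (y i - p i) := by
    rw [← Finset.filter_ge_eq_Iic, Finset.sum_filter]
    exact Finset.sum_congr rfl fun i _ => by split_ifs <;> ring
  rw [h', Finset.sum_sub_distrib] at h
  have h2 : ∑ i ∈ Finset.Iic a, p i ≤ (Finset.Iic a).card • p t :=
    Finset.sum_le_card_nsmul _ _ _ fun i hi => by
      rw [← hat]; exact hp (by simpa using hi)
  rw [nsmul_eq_mul] at h2
  linarith

/-- The exponential functional of a block sum. -/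
def blockExp {N : ℕ} (A : Finset (Fin N)) (z : Fin N → ℝ) : ℝ :=
  Real.exp ((∑ i ∈ A, z i) ^ 2 / (4 * A.card))

lemma measurable_blockExp {N : ℕ} (A : Finset (Fin N)) : Measurable (blockExp A) := by
  unfold blockExp
  fun_prop

lemma sum_law {N : ℕ} (A : Finset (Fin N)) :
    (stdGaussian N).map (∑ i ∈ A, fun z : Fin N → ℝ => z i) = gaussianReal 0 A.card := by
  classical
  have hind : iIndepFun (fun (i : Fin N) (z : Fin N → ℝ) => z i) (stdGaussian N) :=
    iIndepFun_pi (X := fun _ => id) (fun _ => aemeasurable_id)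
  have hprob : IsProbabilityMeasure (stdGaussian N) := by
    unfold _root_.stdGaussian; infer_instance
  induction A using Finset.induction_on with
  | empty =>
    simp only [Finset.sum_empty, Finset.card_empty, Nat.cast_zero, gaussianReal_zero_var]
    change (stdGaussian N).map (fun _ => (0 : ℝ)) = _
    rw [Measure.map_const]; simp
  | insert a s has ih =>
    rw [Finset.sum_insert has, Finset.card_insert_of_notMem has, add_comm]
    have hi := hind.indepFun_finsetSum_of_notMem (fun i => measurable_pi_apply i) has
    have ha : (stdGaussian N).map (fun z : Fin N → ℝ => z a) = gaussianReal 0 1 :=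
      (measurePreserving_eval (fun _ : Fin N => gaussianReal 0 1) a).map_eq
    rw [gaussianReal_add_gaussianReal_of_indepFun hi ih ha]
    simp

lemma lintegral_blockExp {N : ℕ} (A : Finset (Fin N)) (hA : A.Nonempty) :
    ∫⁻ z, ENNReal.ofReal (blockExp A z) ∂(stdGaussian N) ≤ 2 := by
  have hm : (0 : ℝ) < A.card := by exact_mod_cast hA.card_pos
  have hf : Measurable fun x : ℝ => ENNReal.ofReal (Real.exp (x ^ 2 / (4 * A.card))) := by
    fun_prop
  have h1 : ∫⁻ z, ENNReal.ofReal (blockExp A z) ∂(stdGaussian N)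
      = ∫⁻ x, ENNReal.ofReal (Real.exp (x ^ 2 / (4 * A.card))) ∂(gaussianReal 0 A.card) := by
    rw [← sum_law A, lintegral_map hf (by fun_prop)]
    simp [blockExp]
  have hv : (A.card : NNReal) ≠ 0 := by exact_mod_cast hA.card_pos.ne'
  rw [h1, gaussianReal_of_var_ne_zero _ hv,
    lintegral_withDensity_eq_lintegral_mul _ (measurable_gaussianPDF _ _) hf]
  calc _ ≤ ∫⁻ x, 2 * gaussianPDF 0 (2 * A.card) x := by
        refine lintegral_mono fun x => ?_
        simp only [Pi.mul_apply, gaussianPDF]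
        rw [show (2 : ℝ≥0∞) = ENNReal.ofReal 2 by simp, ← ENNReal.ofReal_mul
          (gaussianPDFReal_nonneg _ _ _), ← ENNReal.ofReal_mul (by norm_num)]
        refine ENNReal.ofReal_le_ofReal ?_
        simp only [gaussianPDFReal, sub_zero, NNReal.coe_mul, NNReal.coe_natCast,
          NNReal.coe_ofNat]
        rw [mul_assoc, ← Real.exp_add, ← mul_assoc]
        have e : -x ^ 2 / (2 * (A.card : ℝ)) + x ^ 2 / (4 * A.card)
            = -x ^ 2 / (2 * (2 * A.card)) := by field_simp; ring
        rw [e]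
        refine mul_le_mul_of_nonneg_right ?_ (Real.exp_pos _).le
        have hp := Real.pi_pos
        have hs : √(2 * Real.pi * (2 * A.card)) ≤ 2 * √(2 * Real.pi * A.card) := by
          rw [show 2 * Real.pi * (2 * (A.card : ℝ)) = 2 * (2 * Real.pi * A.card) by ring,
            Real.sqrt_mul (by norm_num)]
          refine mul_le_mul_of_nonneg_right ?_ (Real.sqrt_nonneg _)
          rw [Real.sqrt_le_left (by norm_num)]; norm_num
        have h0 : 0 < √(2 * Real.pi * (A.card : ℝ)) := Real.sqrt_pos.mpr (by positivity)
        have h0' : 0 < √(2 * Real.pi * (2 * (A.card : ℝ))) := Real.sqrt_pos.mpr (by positivity)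
        rw [← div_eq_mul_inv, inv_eq_one_div, div_le_div_iff₀ h0 h0']
        linarith
    _ = 2 := by
        rw [lintegral_const_mul _ (measurable_gaussianPDF _ _),
          lintegral_gaussianPDF_eq_one _ (by simpa using hv), mul_one]

lemma block_sq_le {N : ℕ} (hN : 1 ≤ N) (z : Fin N → ℝ) (F : Fin N → Finset (Fin N)) (a : Fin N) :
    (∑ i ∈ F a, z i) ^ 2 / (F a).card
      ≤ 4 * (Real.log N - 1) + 4 / N * ∑ c, blockExp (F c) z := by
  have hN' : (0 : ℝ) < N := by exact_mod_cast hN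
  set u := (∑ i ∈ F a, z i) ^ 2 / (4 * (F a).card) with hu
  have h1 := Real.add_one_le_exp (u - Real.log N)
  rw [Real.exp_sub, Real.exp_log hN'] at h1
  have h2 : Real.exp u ≤ ∑ c, blockExp (F c) z :=
    Finset.single_le_sum (f := fun c => blockExp (F c) z)
      (fun c _ => (Real.exp_pos _).le) (Finset.mem_univ a)
  have h3 : Real.exp u / N ≤ (∑ c, blockExp (F c) z) / N := by gcongr
  have h4 : (∑ i ∈ F a, z i) ^ 2 / (F a).card = 4 * u := by
    rw [hu]
    rcases eq_or_ne ((F a).card : ℝ) 0 with h | h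
    · simp [h]
    · field_simp
  rw [h4]
  have h5 : 4 / (N : ℝ) * ∑ c, blockExp (F c) z = 4 * ((∑ c, blockExp (F c) z) / N) := by ring
  rw [h5]; linarith

lemma sq_aux (n m p S : ℝ) (hn : 0 < n) (hnm : n ≤ m) (hp : 0 ≤ p) (h : m * p ≤ S) :
    p ^ 2 ≤ (1 / n) * (S ^ 2 / m) := by
  have hm : 0 < m := hn.trans_le hnm
  have h1 : (m * p) ^ 2 ≤ S ^ 2 := by
    have : 0 ≤ m * p := by positivity
    gcongr
  rw [div_mul_div_comm, one_mul, le_div_iff₀ (by positivity)]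
  have : p ^ 2 * (n * m) ≤ p ^ 2 * (m * m) := by gcongr
  nlinarith

lemma pointwise {N : ℕ} (hN : 1 ≤ N) (y p : Fin N → ℝ) (hp : Monotone p)
    (hmin : ∀ x ∈ monoCone N, (∑ i, (y i - p i) ^ 2) ≤ ∑ i, (y i - x i) ^ 2) :
    ∑ t, p t ^ 2 ≤ (1 + Real.log N) * (8 * (Real.log N - 1) +
      4 / N * ∑ c, (blockExp (Finset.Ici c) y + blockExp (Finset.Iic c) y)) := by
  set Q1 := 4 * (Real.log N - 1) + 4 / N * ∑ c, blockExp (Finset.Ici c) y with hQ1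
  set Q2 := 4 * (Real.log N - 1) + 4 / N * ∑ c, blockExp (Finset.Iic c) y with hQ2
  have q1 := block_sq_le hN y (fun c => Finset.Ici c)
  have q2 := block_sq_le hN y (fun c => Finset.Iic c)
  simp only [← hQ1, ← hQ2] at q1 q2
  have Q1n : 0 ≤ Q1 := le_trans (by positivity) (q1 ⟨0, hN⟩)
  have Q2n : 0 ≤ Q2 := le_trans (by positivity) (q2 ⟨0, hN⟩)
  have key : ∀ t : Fin N, p t ^ 2 ≤ 1 / ((N - 1 - (t : ℕ) : ℕ) + 1 : ℝ) * Q1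
      + 1 / ((t : ℕ) + 1 : ℝ) * Q2 := by
    intro t
    rcases le_total 0 (p t) with h | h
    · obtain ⟨a, hat, ha⟩ := proj_upper y p hp hmin t
      have hc : ((N - 1 - (t : ℕ) : ℕ) + 1 : ℝ) ≤ (Finset.Ici a).card := by
        rw [Fin.card_Ici]
        have : (a : ℕ) ≤ t := hat
        have := t.2
        exact_mod_cast (by omega : N - 1 - (t : ℕ) + 1 ≤ N - a)
      have := sq_aux _ _ _ _ (by positivity) hc h ha
      refine (this.trans (mul_le_mul_of_nonneg_left (q1 a) (by positivity))).trans ?_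
      exact le_add_of_nonneg_right (by positivity)
    · obtain ⟨b, hbt, hb⟩ := proj_lower y p hp hmin t
      have hc : ((t : ℕ) + 1 : ℝ) ≤ (Finset.Iic b).card := by
        rw [Fin.card_Iic]
        have : (t : ℕ) ≤ b := hbt
        exact_mod_cast (by omega : (t : ℕ) + 1 ≤ b + 1)
      have := sq_aux _ _ (-p t) (-∑ i ∈ Finset.Iic b, y i) (by positivity) hc
        (by linarith) (by linarith)
      rw [neg_sq, neg_sq] at this
      refine (this.trans (mul_le_mul_of_nonneg_left (q2 b) (by positivity))).trans ?_
      exact le_add_of_nonneg_left (by positivity)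
  have hH : ∑ t : Fin N, 1 / ((t : ℕ) + 1 : ℝ) ≤ 1 + Real.log N := by
    have := harmonic_le_one_add_log N
    rw [Fin.sum_univ_eq_sum_range (fun t => 1 / ((t : ℕ) + 1 : ℝ)) N]
    simpa [harmonic] using this
  have hH' : ∑ t : Fin N, 1 / ((N - 1 - (t : ℕ) : ℕ) + 1 : ℝ) ≤ 1 + Real.log N := by
    rw [Fin.sum_univ_eq_sum_range (fun t => 1 / ((N - 1 - t : ℕ) + 1 : ℝ)) N,
      Finset.sum_range_reflect (fun t => 1 / ((t : ℕ) + 1 : ℝ)) N,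
      ← Fin.sum_univ_eq_sum_range (fun t => 1 / ((t : ℕ) + 1 : ℝ)) N]
    exact hH
  calc _ ≤ _ := Finset.sum_le_sum fun t _ => key t
    _ = (∑ t : Fin N, 1 / ((N - 1 - (t : ℕ) : ℕ) + 1 : ℝ)) * Q1
        + (∑ t : Fin N, 1 / ((t : ℕ) + 1 : ℝ)) * Q2 := by
      rw [Finset.sum_add_distrib, Finset.sum_mul, Finset.sum_mul]
    _ ≤ (1 + Real.log N) * Q1 + (1 + Real.log N) * Q2 := by gcongr
    _ = _ := by rw [hQ1, hQ2, Finset.sum_add_distrib]; ring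

lemma lintegral_sq {N : ℕ} :
    ∫⁻ z, ENNReal.ofReal (∑ i, z i ^ 2) ∂(stdGaussian N) = N := by
  have h1 : ∫⁻ x, ENNReal.ofReal (x ^ 2) ∂(gaussianReal 0 1) = 1 := by
    have hv := variance_fun_id_gaussianReal (μ := 0) (v := 1)
    rw [variance_of_integral_eq_zero (by fun_prop) (by simp)] at hv
    have hi : Integrable (fun x : ℝ => x ^ 2) (gaussianReal 0 1) :=
      (memLp_id_gaussianReal 2).integrable_sq
    rw [← ofReal_integral_eq_lintegral_ofReal hi (ae_of_all _ fun x => sq_nonneg x)]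
    simp [hv]
  have h2 : ∀ i : Fin N, ∫⁻ z, ENNReal.ofReal (z i ^ 2) ∂(stdGaussian N) = 1 := by
    intro i
    rw [← h1]
    exact (measurePreserving_eval (fun _ : Fin N => gaussianReal 0 1) i).lintegral_comp
      (f := fun x => ENNReal.ofReal (x ^ 2)) (by fun_prop)
  simp_rw [ENNReal.ofReal_sum_of_nonneg (fun i _ => sq_nonneg _)]
  rw [lintegral_finsetSum _ (fun i _ => by fun_prop)]
  simp [h2]

/-- **Bounds for the risk at zero of monotone regression.**
Let `η N` be, in each dimension `N`, the Euclidean projection onto the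
monotone cone `M_N` and `r(N) = E ‖η^mono(Z)‖₂²`.  Then `r(1) = 1`; for
`N ≥ 10`, `r(N) ≤ 20 (log N)²`; and for every `N ≥ 1`,
`r(N) < 2N(log N + 1)` (natural logarithm). -/
theorem monoReg_risk_at_zero_bounds
    (η : ∀ ℓ : ℕ, (Fin ℓ → ℝ) → (Fin ℓ → ℝ))
    (hmeas : ∀ ℓ, Measurable (η ℓ))
    (hproj : ∀ (ℓ : ℕ) (y : Fin ℓ → ℝ), η ℓ y ∈ monoCone ℓ ∧
      ∀ x ∈ monoCone ℓ, (∑ i, (y i - η ℓ y i) ^ 2) ≤ ∑ i, (y i - x i) ^ 2) :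
    riskAtZero η 1 = 1 ∧
    (∀ N : ℕ, 10 ≤ N →
      riskAtZero η N ≤ ENNReal.ofReal (20 * Real.log N ^ 2)) ∧
    (∀ N : ℕ, 1 ≤ N →
      riskAtZero η N < ENNReal.ofReal (2 * N * (Real.log N + 1))) := by
  have hle : ∀ N, riskAtZero η N ≤ N := by
    intro N
    rw [← lintegral_sq]
    exact lintegral_mono fun z => ENNReal.ofReal_le_ofReal
      (proj_norm z _ (hproj N z).1 (hproj N z).2)
  refine ⟨?_, ?_, ?_⟩
  · have h : ∀ z, η 1 z = z := by
      intro z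
      have h1 := (hproj 1 z).2 z (fun i j _ => by rw [Subsingleton.elim i j])
      simp at h1
      ext i
      rw [Subsingleton.elim i 0]
      nlinarith [sq_nonneg (z 0 - η 1 z 0)]
    unfold riskAtZero
    simp_rw [h]
    rw [lintegral_sq]; simp
  · intro N hN
    have hN' : (10 : ℝ) ≤ N := by exact_mod_cast hN
    have hL : 2 ≤ Real.log N := by
      rw [Real.le_log_iff_exp_le (by linarith)]
      have := Real.exp_one_lt_d9
      have h0 := Real.exp_pos 1
      rw [show (2 : ℝ) = 1 + 1 by norm_num, Real.exp_add]
      nlinarith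
    set L := Real.log N with hLdef
    have hsum : ∫⁻ z, ENNReal.ofReal (∑ c, (blockExp (Finset.Ici c) z
        + blockExp (Finset.Iic c) z)) ∂(stdGaussian N) ≤ ENNReal.ofReal (4 * N) := by
      have hb : ∀ (A : Finset (Fin N)) z, 0 ≤ blockExp A z := fun A z => (Real.exp_pos _).le
      have hmA := fun A : Finset (Fin N) => (measurable_blockExp A).ennreal_ofReal
      simp_rw [ENNReal.ofReal_sum_of_nonneg
        (fun i _ => add_nonneg (hb (Finset.Ici i) _) (hb (Finset.Iic i) _)),
        ENNReal.ofReal_add (hb _ _) (hb _ _)]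
      rw [lintegral_finsetSum (f := fun (x : Fin N) z => ENNReal.ofReal (blockExp (Finset.Ici x) z) +
          ENNReal.ofReal (blockExp (Finset.Iic x) z)) _ (fun i _ => (hmA _).add (hmA _))]
      calc _ ≤ ∑ c : Fin N, (4 : ℝ≥0∞) := by
            refine Finset.sum_le_sum fun c _ => ?_
            rw [lintegral_add_left (hmA _)]
            refine (add_le_add (lintegral_blockExp _ ⟨c, by simp⟩)
              (lintegral_blockExp _ ⟨c, by simp⟩)).trans ?_
            norm_num
        _ = _ := by
            rw [ENNReal.ofReal_mul (by norm_num)]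
            simp [mul_comm]
    have hprob : IsProbabilityMeasure (stdGaussian N) := by
      unfold _root_.stdGaussian; infer_instance
    calc riskAtZero η N ≤ ∫⁻ z, (ENNReal.ofReal ((1 + L) * (8 * (L - 1)))
          + ENNReal.ofReal ((1 + L) * (4 / N)) * ENNReal.ofReal (∑ c, (blockExp (Finset.Ici c) z
            + blockExp (Finset.Iic c) z))) ∂(stdGaussian N) := by
          refine lintegral_mono fun z => ?_
          simp only
          have hpos : 0 ≤ ∑ c, (blockExp (Finset.Ici c) z + blockExp (Finset.Iic c) z) :=
            Finset.sum_nonneg fun c _ => add_nonneg (Real.exp_pos _).le (Real.exp_pos _).le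
          rw [← ENNReal.ofReal_mul (by positivity), ← ENNReal.ofReal_add
            (mul_nonneg (by linarith) (by linarith)) (by positivity)]
          refine ENNReal.ofReal_le_ofReal ?_
          refine (pointwise (by omega) z _ (hproj N z).1 (hproj N z).2).trans (le_of_eq ?_)
          ring
      _ = ENNReal.ofReal ((1 + L) * (8 * (L - 1))) + ENNReal.ofReal ((1 + L) * (4 / N)) *
          ∫⁻ z, ENNReal.ofReal (∑ c, (blockExp (Finset.Ici c) z
            + blockExp (Finset.Iic c) z)) ∂(stdGaussian N) := by
          rw [lintegral_add_left measurable_const, lintegral_const, measure_univ, mul_one,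
            lintegral_const_mul' _ _ ENNReal.ofReal_ne_top]
      _ ≤ ENNReal.ofReal ((1 + L) * (8 * (L - 1))) + ENNReal.ofReal ((1 + L) * (4 / N)) *
          ENNReal.ofReal (4 * N) := by gcongr
      _ ≤ _ := by
          rw [← ENNReal.ofReal_mul (by positivity), ← ENNReal.ofReal_add
            (mul_nonneg (by linarith) (by linarith)) (by positivity)]
          refine ENNReal.ofReal_le_ofReal ?_
          have : (1 + L) * (4 / (N : ℝ)) * (4 * N) = 16 * (1 + L) := by field_simp; ring
          rw [this]; nlinarith
  · intro N hN
    refine (hle N).trans_lt ?_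
    have hN' : (1 : ℝ) ≤ N := by exact_mod_cast hN
    have hL := Real.log_nonneg hN'
    rw [← ENNReal.ofReal_natCast, ENNReal.ofReal_lt_ofReal_iff (by positivity)]
    nlinarith
end
end

section
/- For N ≥ 1, τ ≥ 0 and s = (s₁,s₂) ∈ {(+1,+1),(+1,−1)} (written ++ and +−), let η^tv_s(y;τ) = argmin_{x∈ℝ^N} { ½‖y − x‖₂² + τ‖x‖_TV + τ(s₁x₁ + s₂x_N) } and let r_s(N;τ) = E ‖η^tv_s(Z;τ)‖₂² with Z ∼ N(0, I_N). For L ∈ ℕ let F_{N,ε,TV}(L) be the set of Borel probability measures ν on ℝ^N supported on vectors x whose maximal constant segments all have length at most L and with E_ν[#{t ∈ {1,…,N−1} : X_t ≠ X_{t+1}}] ≤ Nε, and set M(F_{N,ε,TV}(L)|TV) = (1/N) inf_{τ≥0} sup_{ν∈F_{N,ε,TV}(L)} E_ν ‖X − η^tv(X+Z;τ)‖₂² (X ∼ ν, Z ∼ N(0,I_N) independent). Then the limit M_L(ε|TV) = lim_{N→∞} M(F_{N,ε,TV}(L)|TV) exists and equals inf_{τ≥0} max_π { ε Σ_{1≤ℓ≤L,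 s∈{++,+−}} π_{ℓ,s} r_s(ℓ;τ) : π a probability distribution on {1,…,L}×{++,+−} with Σ_{ℓ,s} ℓ π_{ℓ,s} = 1/ε }. -/
open MeasureTheory ProbabilityTheory ENNReal Filter

noncomputable section

/-- Extension of `x : ℝ^N` to `ℕ` by zero. -/
def extz (N : ℕ) (x : Fin N → ℝ) : ℕ → ℝ := fun i => if h : i < N then x ⟨i, h⟩ else 0

/-- The discrete total variation `‖x‖_TV = Σ_{i=1}^{N−1} |x_{i+1} − x_i|`. -/
def tvNorm (N : ℕ) (x : Fin N → ℝ) : ℝ :=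
  ∑ i ∈ Finset.range (N - 1), |extz N x (i + 1) - extz N x i|

/-- The objective of the boundary-signed TV denoiser:
`½‖y − x‖₂² + τ‖x‖_TV + τ(s₁x₁ + s₂x_N)`. -/
def tvObj (s : ℝ × ℝ) (N : ℕ) (τ : ℝ) (y x : Fin N → ℝ) : ℝ :=
  (1 / 2) * (∑ i, (y i - x i) ^ 2) + τ * tvNorm N x +
    τ * (s.1 * extz N x 0 + s.2 * extz N x (N - 1))

/-- The number of change points of `x : ℝ^N`, i.e. of adjacent pairs
`(i, i+1)` with `x i ≠ x (i+1)`. -/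
def changeCount (N : ℕ) (x : Fin N → ℝ) : ℕ :=
  Nat.card {p : Fin N × Fin N // (p.1 : ℕ) + 1 = (p.2 : ℕ) ∧ x p.1 ≠ x p.2}

/-- `x : ℝ^N` has all its maximal constant segments of length at most `L`,
i.e. there are no `L+1` consecutive equal entries. -/
def segOK (L N : ℕ) (x : Fin N → ℝ) : Prop :=
  ∀ i : ℕ, i + L < N → ∃ j : ℕ, i ≤ j ∧ j < i + L ∧ extz N x j ≠ extz N x (j + 1)

/-- The class `F_{N,ε,TV}(L)`: probability measures supported on vectors whose
maximal constant segments have length at most `L`, with expected number of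
change points at most `Nε`. -/
def tvClass (N : ℕ) (ε : ℝ) (L : ℕ) : Set (Measure (Fin N → ℝ)) :=
  {ν | IsProbabilityMeasure ν ∧ ν {x | ¬ segOK L N x} = 0 ∧
    (∫⁻ x, (changeCount N x : ℝ≥0∞) ∂ν) ≤ (N : ℝ≥0∞) * ENNReal.ofReal ε}

section
variable (η : (ℝ × ℝ) → ∀ N : ℕ, ℝ → (Fin N → ℝ) → (Fin N → ℝ))

/-- The risk at zero `r_s(ℓ;τ) = E ‖η^tv_s(Z;τ)‖₂²`, `Z ∼ N(0,I_ℓ)`. -/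
def tvRiskZero (s : ℝ × ℝ) (ℓ : ℕ) (τ : ℝ) : ℝ≥0∞ :=
  ∫⁻ z, ENNReal.ofReal (∑ i, (η s ℓ τ z i) ^ 2) ∂(stdGaussian ℓ)

/-- The minimax MSE `M(F_{N,ε,TV}(L)|TV)
= (1/N) inf_{τ≥0} sup_{ν ∈ F_{N,ε,TV}(L)} E ‖X − η^tv(X+Z;τ)‖₂²`,
where `η^tv = η^tv_{(0,0)}` is the plain TV denoiser. -/
def tvMSE (N : ℕ) (ε : ℝ) (L : ℕ) : ℝ≥0∞ :=
  (N : ℝ≥0∞)⁻¹ *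
    ⨅ (τ : ℝ) (_ : 0 ≤ τ), ⨆ ν ∈ tvClass N ε L,
      ∫⁻ p, ENNReal.ofReal (∑ i, (p.1 i - η (0, 0) N τ (p.1 + p.2) i) ^ 2)
        ∂(ν.prod (stdGaussian N))

/-- The limiting variational value
`inf_{τ≥0} max_π { ε Σ_{ℓ,s} π_{ℓ,s} r_s(ℓ;τ) }`, the maximum being over
probability distributions `π` on `{1,…,L}×{++,+−}` with
`Σ_{ℓ,s} ℓ π_{ℓ,s} = 1/ε`. -/
def tvLimitVal (ε : ℝ) (L : ℕ) : ℝ≥0∞ :=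
  ⨅ (τ : ℝ) (_ : 0 ≤ τ),
    ⨆ (πp : ℕ → ℝ≥0∞) (πm : ℕ → ℝ≥0∞)
      (_ : (∀ ℓ : ℕ, (ℓ = 0 ∨ L < ℓ) → πp ℓ = 0 ∧ πm ℓ = 0) ∧
        (∑' ℓ : ℕ, (πp ℓ + πm ℓ)) = 1 ∧
        (∑' ℓ : ℕ, (ℓ : ℝ≥0∞) * (πp ℓ + πm ℓ)) = ENNReal.ofReal (1 / ε)),
      ENNReal.ofReal ε *
        ∑' ℓ : ℕ, (πp ℓ * tvRiskZero η (1, 1) ℓ τ +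
          πm ℓ * tvRiskZero η (1, -1) ℓ τ)

end

/-! ### Proximal comparison lemmas -/

lemma le_of_forall_small {a c K : ℝ} (hK : 0 ≤ K)
    (h : ∀ t : ℝ, 0 < t → t ≤ 1 → t * a ≤ t * c + t ^ 2 * K) : a ≤ c := by
  by_contra hlt
  push Not at hlt
  have hd : 0 < a - c := by linarith
  set t : ℝ := min 1 ((a - c) / (2 * (K + 1))) with ht
  have ht0 : 0 < t := lt_min one_pos (by positivity)
  have ht1 : t ≤ 1 := min_le_left _ _
  have h1 := h t ht0 ht1
  have h2 : a ≤ c + t * K := by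
    have : t * a ≤ t * (c + t * K) := by nlinarith
    exact le_of_mul_le_mul_left this ht0
  have h3 : t ≤ (a - c) / (2 * (K + 1)) := min_le_right _ _
  have h4 : t * (2 * (K + 1)) ≤ a - c := by
    rwa [le_div_iff₀ (by positivity)] at h3
  nlinarith

lemma prox_le {ι : Type*} [Fintype ι] (f g : (ι → ℝ) → ℝ) (z e e' : ι → ℝ)
    (hf : ∀ t : ℝ, 0 ≤ t → t ≤ 1 → f ((1 - t) • e) ≤ (1 - t) * f e)
    (hg : ∀ t : ℝ, 0 ≤ t → g (e' + t • e) ≤ g e' + t * g e)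
    (hfg : g e ≤ f e)
    (he : ∀ w, (1 / 2) * (∑ i, (z i - e i) ^ 2) + f e ≤ (1 / 2) * (∑ i, (z i - w i) ^ 2) + f w)
    (he' : ∀ w, (1 / 2) * (∑ i, (z i - e' i) ^ 2) + g e' ≤
      (1 / 2) * (∑ i, (z i - w i) ^ 2) + g w) :
    ∑ i, (e i) ^ 2 ≤ ∑ i, (e' i) ^ 2 := by
  have hE : 0 ≤ (1 / 2) * ∑ i, (e i) ^ 2 := by positivity
  have h1 : f e ≤ ∑ i, (z i - e i) * e i := by
    apply le_of_forall_small hE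
    intro t ht0 ht1
    have h := he ((1 - t) • e)
    have h' := hf t ht0.le ht1
    have hs : ∑ i, (z i - ((1 - t) • e) i) ^ 2 =
        ∑ i, (z i - e i) ^ 2 + 2 * t * ∑ i, (z i - e i) * e i + t ^ 2 * ∑ i, (e i) ^ 2 := by
      rw [Finset.mul_sum, Finset.mul_sum, ← Finset.sum_add_distrib, ← Finset.sum_add_distrib]
      refine Finset.sum_congr rfl fun i _ => ?_
      simp only [Pi.smul_apply, smul_eq_mul]; ring
    rw [hs] at h
    nlinarith
  have h2 : ∑ i, (z i - e' i) * e i ≤ g e := by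
    apply le_of_forall_small hE
    intro t ht0 ht1
    have h := he' (e' + t • e)
    have h' := hg t ht0.le
    have hs : ∑ i, (z i - (e' + t • e) i) ^ 2 =
        ∑ i, (z i - e' i) ^ 2 - 2 * t * ∑ i, (z i - e' i) * e i + t ^ 2 * ∑ i, (e i) ^ 2 := by
      rw [Finset.mul_sum, Finset.mul_sum, ← Finset.sum_sub_distrib, ← Finset.sum_add_distrib]
      refine Finset.sum_congr rfl fun i _ => ?_
      simp only [Pi.smul_apply, Pi.add_apply, smul_eq_mul]; ring
    rw [hs] at h
    nlinarith
  have h3 : ∑ i, (z i - e' i) * e i ≤ ∑ i, (z i - e i) * e i := h2.trans (hfg.trans h1)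
  have h4 : 0 ≤ ∑ i, (e' i - e i) ^ 2 := Finset.sum_nonneg fun i _ => sq_nonneg _
  have h5 : ∑ i, (e' i - e i) ^ 2 =
      ∑ i, (e' i) ^ 2 - ∑ i, (e i) ^ 2 -
        2 * (∑ i, (z i - e i) * e i - ∑ i, (z i - e' i) * e i) := by
    rw [← Finset.sum_sub_distrib, ← Finset.sum_sub_distrib, Finset.mul_sum,
      ← Finset.sum_sub_distrib]
    refine Finset.sum_congr rfl fun i _ => ?_
    ring
  nlinarith

lemma prox_unique {ι : Type*} [Fintype ι] (f : (ι → ℝ) → ℝ) (z e e' : ι → ℝ)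
    (hf : f ((1 / 2 : ℝ) • (e + e')) ≤ (1 / 2) * (f e + f e'))
    (he : ∀ w, (1 / 2) * (∑ i, (z i - e i) ^ 2) + f e ≤ (1 / 2) * (∑ i, (z i - w i) ^ 2) + f w)
    (he' : ∀ w, (1 / 2) * (∑ i, (z i - e' i) ^ 2) + f e' ≤
      (1 / 2) * (∑ i, (z i - w i) ^ 2) + f w) : e = e' := by
  have h1 := he ((1 / 2 : ℝ) • (e + e'))
  have h2 := he' ((1 / 2 : ℝ) • (e + e'))
  have hs : ∑ i, (z i - ((1 / 2 : ℝ) • (e + e')) i) ^ 2 =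
      (1 / 2) * ∑ i, (z i - e i) ^ 2 + (1 / 2) * ∑ i, (z i - e' i) ^ 2
        - (1 / 4) * ∑ i, (e i - e' i) ^ 2 := by
    rw [Finset.mul_sum, Finset.mul_sum, Finset.mul_sum, ← Finset.sum_add_distrib,
      ← Finset.sum_sub_distrib]
    refine Finset.sum_congr rfl fun i _ => ?_
    simp only [Pi.smul_apply, Pi.add_apply, smul_eq_mul]; ring
  rw [hs] at h1 h2
  have h3 : ∑ i, (e i - e' i) ^ 2 ≤ 0 := by nlinarith
  have h4 : ∑ i, (e i - e' i) ^ 2 = 0 :=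
    le_antisymm h3 (Finset.sum_nonneg fun i _ => sq_nonneg _)
  rw [Finset.sum_eq_zero_iff_of_nonneg (fun i _ => sq_nonneg _)] at h4
  funext i
  have := h4 i (Finset.mem_univ i)
  have := pow_eq_zero_iff (two_ne_zero) |>.1 this
  linarith

/-! ### The penalty -/

/-- The boundary-signed TV penalty. -/
def tvPen (s : ℝ × ℝ) (N : ℕ) (x : Fin N → ℝ) : ℝ :=
  tvNorm N x + (s.1 * extz N x 0 + s.2 * extz N x (N - 1))

lemma tvObj_eq (s : ℝ × ℝ) (N : ℕ) (τ : ℝ) (y x : Fin N → ℝ) :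
    tvObj s N τ y x = (1 / 2) * (∑ i, (y i - x i) ^ 2) + τ * tvPen s N x := by
  unfold tvObj tvPen; ring

lemma extz_add (N : ℕ) (x y : Fin N → ℝ) (i : ℕ) :
    extz N (x + y) i = extz N x i + extz N y i := by
  unfold extz; split_ifs <;> simp

lemma extz_smul (N : ℕ) (t : ℝ) (x : Fin N → ℝ) (i : ℕ) :
    extz N (t • x) i = t * extz N x i := by
  unfold extz; split_ifs <;> simp

lemma extz_lt (N : ℕ) (x : Fin N → ℝ) (i : ℕ) (h : i < N) : extz N x i = x ⟨i, h⟩ := by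
  unfold extz; rw [dif_pos h]

lemma extz_fin (N : ℕ) (x : Fin N → ℝ) (i : Fin N) : extz N x i = x i := by
  rw [extz_lt N x i i.2]

lemma tvNorm_add (N : ℕ) (x y : Fin N → ℝ) : tvNorm N (x + y) ≤ tvNorm N x + tvNorm N y := by
  unfold tvNorm
  rw [← Finset.sum_add_distrib]
  refine Finset.sum_le_sum fun i _ => ?_
  rw [extz_add, extz_add]
  have := abs_add_le (extz N x (i + 1) - extz N x i) (extz N y (i + 1) - extz N y i)
  rwa [show extz N x (i + 1) + extz N y (i + 1) - (extz N x i + extz N y i) =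
    extz N x (i + 1) - extz N x i + (extz N y (i + 1) - extz N y i) by ring]

lemma tvNorm_smul (N : ℕ) (t : ℝ) (x : Fin N → ℝ) : tvNorm N (t • x) = |t| * tvNorm N x := by
  unfold tvNorm
  rw [Finset.mul_sum]
  refine Finset.sum_congr rfl fun i _ => ?_
  rw [extz_smul, extz_smul, ← mul_sub, abs_mul]

lemma tvNorm_nonneg (N : ℕ) (x : Fin N → ℝ) : 0 ≤ tvNorm N x :=
  Finset.sum_nonneg fun _ _ => abs_nonneg _

lemma tvPen_add (s : ℝ × ℝ) (N : ℕ) (x y : Fin N → ℝ) :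
    tvPen s N (x + y) ≤ tvPen s N x + tvPen s N y := by
  unfold tvPen
  have := tvNorm_add N x y
  rw [extz_add, extz_add]; linarith

lemma tvPen_smul (s : ℝ × ℝ) (N : ℕ) (t : ℝ) (ht : 0 ≤ t) (x : Fin N → ℝ) :
    tvPen s N (t • x) = t * tvPen s N x := by
  unfold tvPen
  rw [tvNorm_smul, extz_smul, extz_smul, abs_of_nonneg ht]; ring

lemma tvPen_neg (s : ℝ × ℝ) (N : ℕ) (x : Fin N → ℝ) : tvPen (-s) N (-x) = tvPen s N x := by
  unfold tvPen
  have h : (-x) = (-1 : ℝ) • x := by simp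
  rw [h, tvNorm_smul, extz_smul, extz_smul]
  simp

section
variable (η : (ℝ × ℝ) → ∀ N : ℕ, ℝ → (Fin N → ℝ) → (Fin N → ℝ))

lemma eta_neg
    (hmin : ∀ (s : ℝ × ℝ) (N : ℕ) (τ : ℝ), 0 ≤ τ → ∀ y x : Fin N → ℝ,
      tvObj s N τ y (η s N τ y) ≤ tvObj s N τ y x)
    (s : ℝ × ℝ) (N : ℕ) (τ : ℝ) (hτ : 0 ≤ τ) (z : Fin N → ℝ) :
    η (-s) N τ z = - η s N τ (-z) := by
  have key : ∀ w : Fin N → ℝ, tvObj (-s) N τ z (-w) = tvObj s N τ (-z) w := by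
    intro w
    rw [tvObj_eq, tvObj_eq, tvPen_neg]
    congr 2
    refine Finset.sum_congr rfl fun i _ => ?_
    simp only [Pi.neg_apply]; ring
  refine prox_unique (fun w => τ * tvPen (-s) N w) z _ _ ?_ ?_ ?_
  · rw [tvPen_smul _ _ _ (by norm_num)]
    have := mul_le_mul_of_nonneg_left (tvPen_add (-s) N (η (-s) N τ z) (- η s N τ (-z))) hτ
    linarith
  · intro w
    have := hmin (-s) N τ hτ z w
    rwa [tvObj_eq, tvObj_eq] at this
  · intro w
    have := hmin s N τ hτ (-z) (-w)
    rw [← key, ← key, neg_neg] at this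
    rwa [tvObj_eq, tvObj_eq] at this

/-- Crude bound: the norm of `η_s(z)` is at most that of `z - τ (s₁ e₁ + s₂ e_N)`. -/
lemma eta_sq_le
    (hmin : ∀ (s : ℝ × ℝ) (N : ℕ) (τ : ℝ), 0 ≤ τ → ∀ y x : Fin N → ℝ,
      tvObj s N τ y (η s N τ y) ≤ tvObj s N τ y x)
    (s : ℝ × ℝ) (N : ℕ) (τ : ℝ) (hτ : 0 ≤ τ) (z : Fin N → ℝ) :
    ∑ i, (η s N τ z i) ^ 2 ≤ ∑ i : Fin N, (z i - τ * ((if (i : ℕ) = 0 then s.1 else 0) +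
      (if (i : ℕ) = N - 1 then s.2 else 0))) ^ 2 := by
  have hlin : ∀ w : Fin N → ℝ, s.1 * extz N w 0 + s.2 * extz N w (N - 1) =
      ∑ i : Fin N, ((if (i : ℕ) = 0 then s.1 else 0) +
      (if (i : ℕ) = N - 1 then s.2 else 0)) * w i := by
    intro w
    rcases Nat.eq_zero_or_pos N with h0 | hN
    · subst h0; simp [extz]
    · simp only [add_mul, Finset.sum_add_distrib, ite_mul, zero_mul]
      rw [extz_lt N w 0 hN, extz_lt N w (N - 1) (by omega)]
      congr 1
      · rw [Finset.sum_eq_single (⟨0, hN⟩ : Fin N)]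
        · simp
        · intro i _ hi
          rw [if_neg]; intro h; apply hi; ext; simpa using h
        · simp
      · rw [Finset.sum_eq_single (⟨N - 1, by omega⟩ : Fin N)]
        · simp
        · intro i _ hi
          rw [if_neg]; intro h; apply hi; ext; simpa using h
        · simp
  set v : Fin N → ℝ := fun i => ((if (i : ℕ) = 0 then s.1 else 0) +
      (if (i : ℕ) = N - 1 then s.2 else 0)) with hv
  have := prox_le (fun w => τ * tvPen s N w) (fun w => τ * ∑ i, v i * w i) z (η s N τ z)
    (fun i => z i - τ * v i) ?_ ?_ ?_ ?_ ?_
  · simpa [hv] using this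
  · intro t h0 h1
    rw [tvPen_smul _ _ _ (by linarith)]; apply le_of_eq; ring
  · intro t h0
    apply le_of_eq
    simp only [Pi.add_apply, Pi.smul_apply, smul_eq_mul, mul_add, Finset.sum_add_distrib]
    congr 1
    simp only [Finset.mul_sum]
    refine Finset.sum_congr rfl fun i _ => ?_
    ring
  · apply mul_le_mul_of_nonneg_left _ hτ
    unfold tvPen
    rw [hlin]
    have := tvNorm_nonneg N (η s N τ z)
    linarith
  · intro w
    have := hmin s N τ hτ z w
    rwa [tvObj_eq, tvObj_eq] at this
  · intro w
    have hs : (1 / 2) * (∑ i, (z i - w i) ^ 2) + τ * ∑ i, v i * w i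
        - ((1 / 2) * (∑ i, (z i - (z i - τ * v i)) ^ 2) + τ * ∑ i, v i * (z i - τ * v i))
        = (1 / 2) * ∑ i, (w i - (z i - τ * v i)) ^ 2 := by
      simp only [Finset.mul_sum]
      rw [← Finset.sum_add_distrib, ← Finset.sum_add_distrib, ← Finset.sum_sub_distrib]
      refine Finset.sum_congr rfl fun i _ => ?_
      ring
    have : 0 ≤ (1 / 2) * ∑ i, (w i - (z i - τ * v i)) ^ 2 := by positivity
    linarith

end

/-! ### Block decompositions -/

/-- `b 0 = 0 < b 1 < ⋯ < b (m+1) = N`. -/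
structure IsBlocks (N m : ℕ) (b : ℕ → ℕ) : Prop where
  zero : b 0 = 0
  last : b (m + 1) = N
  lt : ∀ j, j ≤ m → b j < b (j + 1)

lemma sum_blocks {M : Type*} [AddCommMonoid M] (d : ℕ → M) (b : ℕ → ℕ) (hb0 : b 0 = 0) (m : ℕ)
    (hb : ∀ j, j < m → b j ≤ b (j + 1)) :
    ∑ i ∈ Finset.range (b m), d i =
      ∑ j ∈ Finset.range m, ∑ k ∈ Finset.range (b (j + 1) - b j), d (b j + k) := by
  induction m with
  | zero => simp [hb0]
  | succ m ih =>
    rw [Finset.sum_range_succ, ← ih (fun j hj => hb j (by omega)), ← Finset.sum_Ico_eq_sum_range,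
      Finset.range_eq_Ico, Finset.range_eq_Ico,
      Finset.sum_Ico_consecutive _ (Nat.zero_le _) (hb m (by omega))]

lemma sum_blocks_sub {M : Type*} [AddCommMonoid M] (d : ℕ → M) (b : ℕ → ℕ) (hb0 : b 0 = 0) (m : ℕ)
    (hb : ∀ j, j ≤ m → b j < b (j + 1)) :
    ∑ i ∈ Finset.range (b (m + 1) - 1), d i =
      ∑ j ∈ Finset.range (m + 1), ∑ k ∈ Finset.range (b (j + 1) - b j - 1), d (b j + k) +
        ∑ j ∈ Finset.range m, d (b (j + 1) - 1) := by
  induction m with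
  | zero => simp [hb0]
  | succ m ih =>
    have h1 := hb m (by omega)
    have h2 := hb (m + 1) (by omega)
    rw [Finset.sum_range_succ, Finset.sum_range_succ (fun j => d (b (j + 1) - 1)),
      add_add_add_comm, add_right_comm, add_comm (∑ k ∈ Finset.range _, d _) (d _), ← add_assoc,
      ← ih (fun j hj => hb j (by omega))]
    have e1 : b (m + 1 + 1) - b (m + 1) - 1 = (b (m + 1 + 1) - 1) - b (m + 1) := by omega
    rw [e1, ← Finset.sum_Ico_eq_sum_range, ← Finset.sum_range_succ,
      show b (m + 1) - 1 + 1 = b (m + 1) by omega, Finset.range_eq_Ico,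
      Finset.range_eq_Ico, Finset.sum_Ico_consecutive _ (Nat.zero_le _) (by omega)]

/-- The `j`-th block of a vector. -/
def blk (N : ℕ) (b : ℕ → ℕ) (j : ℕ) (u : Fin N → ℝ) : Fin (b (j + 1) - b j) → ℝ :=
  fun k => extz N u (b j + k)

/-- Discrete difference. -/
def dif (N : ℕ) (u : Fin N → ℝ) (i : ℕ) : ℝ := extz N u (i + 1) - extz N u i

lemma dif_add (N : ℕ) (u v : Fin N → ℝ) (i : ℕ) : dif N (u + v) i = dif N u i + dif N v i := by
  unfold dif; rw [extz_add, extz_add]; ring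

lemma dif_smul (N : ℕ) (t : ℝ) (u : Fin N → ℝ) (i : ℕ) : dif N (t • u) i = t * dif N u i := by
  unfold dif; rw [extz_smul, extz_smul]; ring

lemma extz_blk (N : ℕ) (b : ℕ → ℕ) (j : ℕ) (u : Fin N → ℝ) (k : ℕ) (hk : k < b (j + 1) - b j) :
    extz _ (blk N b j u) k = extz N u (b j + k) := by
  rw [extz_lt _ _ _ hk]; rfl

lemma blk_add (N : ℕ) (b : ℕ → ℕ) (j : ℕ) (u v : Fin N → ℝ) :
    blk N b j (u + v) = blk N b j u + blk N b j v := by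
  funext k; simp only [blk, Pi.add_apply]; rw [extz_add]

lemma blk_smul (N : ℕ) (b : ℕ → ℕ) (j : ℕ) (t : ℝ) (u : Fin N → ℝ) :
    blk N b j (t • u) = t • blk N b j u := by
  funext k; simp only [blk, Pi.smul_apply, smul_eq_mul]; rw [extz_smul]

lemma sum_blk {N m : ℕ} {b : ℕ → ℕ} (hb : IsBlocks N m b) (h : ℝ → ℝ → ℝ) (u v : Fin N → ℝ) :
    ∑ i, h (u i) (v i) =
      ∑ j ∈ Finset.range (m + 1), ∑ k, h (blk N b j u k) (blk N b j v k) := by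
  have h1 : ∑ i, h (u i) (v i) = ∑ i ∈ Finset.range N, h (extz N u i) (extz N v i) := by
    rw [← Fin.sum_univ_eq_sum_range (fun i => h (extz N u i) (extz N v i))]
    refine Finset.sum_congr rfl fun i _ => ?_
    rw [extz_fin, extz_fin]
  rw [h1]
  have h2 := sum_blocks (fun i => h (extz N u i) (extz N v i)) b hb.zero (m + 1)
    (fun j hj => (hb.lt j (by omega)).le)
  rw [hb.last] at h2
  rw [h2]
  refine Finset.sum_congr rfl fun j _ => ?_
  rw [← Fin.sum_univ_eq_sum_range (fun k => h (extz N u (b j + k)) (extz N v (b j + k)))]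
  rfl

lemma sum_pen {N m : ℕ} {b : ℕ → ℕ} (hb : IsBlocks N m b) (σ : ℕ → ℝ) (hσ0 : σ 0 = 0)
    (hσ1 : σ (m + 1) = 0) (u : Fin N → ℝ) :
    ∑ j ∈ Finset.range (m + 1), tvPen (σ j, -σ (j + 1)) _ (blk N b j u) =
      ∑ j ∈ Finset.range (m + 1), ∑ k ∈ Finset.range (b (j + 1) - b j - 1), |dif N u (b j + k)| +
      ∑ j ∈ Finset.range m, σ (j + 1) * dif N u (b (j + 1) - 1) := by
  have h1 : ∀ j ∈ Finset.range (m + 1), tvPen (σ j, -σ (j + 1)) _ (blk N b j u) =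
      ∑ k ∈ Finset.range (b (j + 1) - b j - 1), |dif N u (b j + k)| +
      (σ j * extz N u (b j) - σ (j + 1) * extz N u (b (j + 1) - 1)) := by
    intro j hj
    have hlt := hb.lt j (by simpa [Nat.lt_succ_iff] using hj)
    unfold tvPen tvNorm
    rw [extz_blk _ _ _ _ _ (by omega), extz_blk _ _ _ _ _ (by omega)]
    rw [show b j + (b (j + 1) - b j - 1) = b (j + 1) - 1 by omega]
    simp only [add_zero]
    congr 1
    · refine Finset.sum_congr rfl fun k hk => ?_
      have hk := Finset.mem_range.1 hk
      rw [extz_blk _ _ _ _ _ (by omega), extz_blk _ _ _ _ _ (by omega)]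
      rfl
    · ring
  rw [Finset.sum_congr rfl h1, Finset.sum_add_distrib]
  congr 1
  rw [Finset.sum_sub_distrib, Finset.sum_range_succ', Finset.sum_range_succ (fun j => σ (j + 1) * _),
    hσ0, hσ1, zero_mul, zero_mul, add_zero, add_zero, ← Finset.sum_sub_distrib]
  refine Finset.sum_congr rfl fun j hj => ?_
  have hlt := hb.lt j (by have := Finset.mem_range.1 hj; omega)
  unfold dif
  rw [show b (j + 1) - 1 + 1 = b (j + 1) by omega]; ring

lemma tvNorm_blocks {N m : ℕ} {b : ℕ → ℕ} (hb : IsBlocks N m b) (u : Fin N → ℝ) :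
    tvNorm N u =
      ∑ j ∈ Finset.range (m + 1), ∑ k ∈ Finset.range (b (j + 1) - b j - 1), |dif N u (b j + k)| +
      ∑ j ∈ Finset.range m, |dif N u (b (j + 1) - 1)| := by
  have h2 := sum_blocks_sub (fun i => |dif N u i|) b hb.zero m hb.lt
  rw [hb.last] at h2
  exact h2

lemma exists_blk {N m : ℕ} {b : ℕ → ℕ} (hb : IsBlocks N m b)
    (c : ∀ j, Fin (b (j + 1) - b j) → ℝ) :
    ∃ u : Fin N → ℝ, ∀ j, j ≤ m → blk N b j u = c j := by
  have key : ∀ n, n ≤ m + 1 → ∃ U : ℕ → ℝ, ∀ j, j < n → ∀ k (hk : k < b (j + 1) - b j),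
      U (b j + k) = c j ⟨k, hk⟩ := by
    intro n
    induction n with
    | zero => intro _; exact ⟨fun _ => 0, fun j hj => by omega⟩
    | succ n ih =>
      intro hn
      obtain ⟨U, hU⟩ := ih (by omega)
      refine ⟨fun i => if i < b n then U i else extz _ (c n) (i - b n), ?_⟩
      intro j hj k hk
      have hmono : ∀ q, j + 1 ≤ q → q ≤ m + 1 → b (j + 1) ≤ b q := by
        intro q hq
        induction q, hq using Nat.le_induction with
        | base => intro _; exact le_rfl
        | succ q hq ihq => intro h; exact (ihq (by omega)).trans (hb.lt q (by omega)).le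
      rcases Nat.lt_succ_iff_lt_or_eq.1 hj with h | h
      · have := hmono n (by omega) (by omega)
        simp only []
        rw [if_pos (by omega)]
        exact hU j h k hk
      · subst h
        simp only []
        rw [if_neg (by omega), Nat.add_sub_cancel_left, extz_lt _ _ _ hk]
  obtain ⟨U, hU⟩ := key (m + 1) le_rfl
  refine ⟨fun i => U i, fun j hj => ?_⟩
  funext k
  have hmono : ∀ q, j + 1 ≤ q → q ≤ m + 1 → b (j + 1) ≤ b q := by
    intro q hq
    induction q, hq using Nat.le_induction with
    | base => intro _; exact le_rfl
    | succ q hq ihq => intro h; exact (ihq (by omega)).trans (hb.lt q (by omega)).le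
  have h1 := hmono (m + 1) (by omega) le_rfl
  rw [hb.last] at h1
  have h2 := k.2
  unfold blk
  rw [extz_lt _ _ _ (by omega)]
  exact hU j (by omega) k h2

section
variable (η : (ℝ × ℝ) → ∀ N : ℕ, ℝ → (Fin N → ℝ) → (Fin N → ℝ))

lemma block_common
    (hmin : ∀ (s : ℝ × ℝ) (N : ℕ) (τ : ℝ), 0 ≤ τ → ∀ y x : Fin N → ℝ,
      tvObj s N τ y (η s N τ y) ≤ tvObj s N τ y x)
    {N m : ℕ} {b : ℕ → ℕ} (hb : IsBlocks N m b) (σ : ℕ → ℝ) (τ : ℝ) (hτ : 0 ≤ τ)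
    (z : Fin N → ℝ) :
    ∃ e' : Fin N → ℝ,
      (∀ j, j ≤ m → blk N b j e' = η (σ j, -σ (j + 1)) _ τ (blk N b j z)) ∧
      (∀ w : Fin N → ℝ, (1 / 2) * (∑ i, (z i - e' i) ^ 2) +
        τ * ∑ j ∈ Finset.range (m + 1), tvPen (σ j, -σ (j + 1)) _ (blk N b j e') ≤
        (1 / 2) * (∑ i, (z i - w i) ^ 2) +
        τ * ∑ j ∈ Finset.range (m + 1), tvPen (σ j, -σ (j + 1)) _ (blk N b j w)) := by
  obtain ⟨e', he'⟩ := exists_blk hb (fun j => η (σ j, -σ (j + 1)) _ τ (blk N b j z))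
  refine ⟨e', he', fun w => ?_⟩
  rw [sum_blk hb (fun p q => (p - q) ^ 2) z e', sum_blk hb (fun p q => (p - q) ^ 2) z w,
    Finset.mul_sum, Finset.mul_sum, Finset.mul_sum, Finset.mul_sum, ← Finset.sum_add_distrib,
    ← Finset.sum_add_distrib]
  refine Finset.sum_le_sum fun j hj => ?_
  have := hmin (σ j, -σ (j + 1)) _ τ hτ (blk N b j z) (blk N b j w)
  rw [tvObj_eq, tvObj_eq] at this
  rwa [he' j (by simpa [Nat.lt_succ_iff] using hj)]

lemma tvPen_zero (N : ℕ) (x : Fin N → ℝ) : tvPen (0, 0) N x = tvNorm N x := by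
  simp [tvPen]

lemma err_min
    (hmin : ∀ (s : ℝ × ℝ) (N : ℕ) (τ : ℝ), 0 ≤ τ → ∀ y x : Fin N → ℝ,
      tvObj s N τ y (η s N τ y) ≤ tvObj s N τ y x)
    (N : ℕ) (τ : ℝ) (hτ : 0 ≤ τ) (x z w : Fin N → ℝ) :
    (1 / 2) * (∑ i, (z i - (η (0, 0) N τ (x + z) - x) i) ^ 2) +
      τ * (tvNorm N (x + (η (0, 0) N τ (x + z) - x)) - tvNorm N x) ≤
    (1 / 2) * (∑ i, (z i - w i) ^ 2) + τ * (tvNorm N (x + w) - tvNorm N x) := by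
  have := hmin (0, 0) N τ hτ (x + z) (x + w)
  rw [tvObj_eq, tvObj_eq, tvPen_zero, tvPen_zero] at this
  have e1 : ∑ i, (z i - (η (0, 0) N τ (x + z) - x) i) ^ 2 =
      ∑ i, ((x + z) i - η (0, 0) N τ (x + z) i) ^ 2 :=
    Finset.sum_congr rfl fun i _ => by simp only [Pi.add_apply, Pi.sub_apply]; ring
  have e2 : ∑ i, ((x + z) i - (x + w) i) ^ 2 = ∑ i, (z i - w i) ^ 2 :=
    Finset.sum_congr rfl fun i _ => by simp only [Pi.add_apply]; ring
  rw [e2] at this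
  rw [e1, add_sub_cancel]
  linarith

lemma pen_le {N m : ℕ} {b : ℕ → ℕ} (hb : IsBlocks N m b) (σ : ℕ → ℝ) (hσ0 : σ 0 = 0)
    (hσ1 : σ (m + 1) = 0) (x e : Fin N → ℝ)
    (hin : ∀ j, j ≤ m → ∀ k, k + 1 < b (j + 1) - b j → dif N x (b j + k) = 0)
    (hσ : ∀ j, j < m → |σ (j + 1)| = 1)
    (hσx : ∀ j, j < m → |dif N x (b (j + 1) - 1)| = σ (j + 1) * dif N x (b (j + 1) - 1)) :
    ∑ j ∈ Finset.range (m + 1), tvPen (σ j, -σ (j + 1)) _ (blk N b j e) ≤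
      tvNorm N (x + e) - tvNorm N x := by
  rw [sum_pen hb σ hσ0 hσ1, tvNorm_blocks hb, tvNorm_blocks hb, add_sub_add_comm,
    ← Finset.sum_sub_distrib, ← Finset.sum_sub_distrib]
  refine add_le_add (Finset.sum_le_sum fun j hj => ?_) (Finset.sum_le_sum fun j hj => ?_)
  · rw [← Finset.sum_sub_distrib]
    refine Finset.sum_le_sum fun k hk => ?_
    have := Finset.mem_range.1 hk
    rw [dif_add, hin j (by simpa [Nat.lt_succ_iff] using hj) k (by omega)]
    simp
  · have hj := Finset.mem_range.1 hj
    rw [dif_add, hσx j hj]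
    have h1 : σ (j + 1) * (dif N x (b (j + 1) - 1) + dif N e (b (j + 1) - 1)) ≤
        |dif N x (b (j + 1) - 1) + dif N e (b (j + 1) - 1)| := by
      refine (le_abs_self _).trans ?_
      rw [abs_mul, hσ j hj, one_mul]
    linarith

lemma pen_eq {N m : ℕ} {b : ℕ → ℕ} (hb : IsBlocks N m b) (σ : ℕ → ℝ) (hσ0 : σ 0 = 0)
    (hσ1 : σ (m + 1) = 0) (x e : Fin N → ℝ)
    (hin : ∀ j, j ≤ m → ∀ k, k + 1 < b (j + 1) - b j → dif N x (b j + k) = 0)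
    (hσ : ∀ j, j < m → |σ (j + 1)| = 1)
    (hσx : ∀ j, j < m → |dif N x (b (j + 1) - 1)| = σ (j + 1) * dif N x (b (j + 1) - 1))
    (hbig : ∀ j, j < m → |dif N e (b (j + 1) - 1)| ≤ |dif N x (b (j + 1) - 1)|) :
    ∑ j ∈ Finset.range (m + 1), tvPen (σ j, -σ (j + 1)) _ (blk N b j e) =
      tvNorm N (x + e) - tvNorm N x := by
  rw [sum_pen hb σ hσ0 hσ1, tvNorm_blocks hb, tvNorm_blocks hb, add_sub_add_comm,
    ← Finset.sum_sub_distrib, ← Finset.sum_sub_distrib]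
  refine congr_arg₂ (· + ·) (Finset.sum_congr rfl fun j hj => ?_)
    (Finset.sum_congr rfl fun j hj => ?_)
  · rw [← Finset.sum_sub_distrib]
    refine Finset.sum_congr rfl fun k hk => ?_
    have := Finset.mem_range.1 hk
    rw [dif_add, hin j (by simpa [Nat.lt_succ_iff] using hj) k (by omega)]
    simp
  · have hj := Finset.mem_range.1 hj
    have h0 := hbig j hj
    rw [dif_add]
    rw [hσx j hj] at h0 ⊢
    have h1 : |dif N x (b (j + 1) - 1) + dif N e (b (j + 1) - 1)| =
        |σ (j + 1) * (dif N x (b (j + 1) - 1) + dif N e (b (j + 1) - 1))| := by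
      rw [abs_mul, hσ j hj, one_mul]
    rw [h1, abs_of_nonneg]
    · ring
    · have : |σ (j + 1) * dif N e (b (j + 1) - 1)| ≤ σ (j + 1) * dif N x (b (j + 1) - 1) := by
        rwa [abs_mul, hσ j hj, one_mul]
      have := (abs_le.1 this).1
      linarith

lemma block_err_le
    (hmin : ∀ (s : ℝ × ℝ) (N : ℕ) (τ : ℝ), 0 ≤ τ → ∀ y x : Fin N → ℝ,
      tvObj s N τ y (η s N τ y) ≤ tvObj s N τ y x)
    {N m : ℕ} {b : ℕ → ℕ} (hb : IsBlocks N m b) (σ : ℕ → ℝ) (hσ0 : σ 0 = 0)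
    (hσ1 : σ (m + 1) = 0) (τ : ℝ) (hτ : 0 ≤ τ) (x z : Fin N → ℝ)
    (hin : ∀ j, j ≤ m → ∀ k, k + 1 < b (j + 1) - b j → dif N x (b j + k) = 0)
    (hσ : ∀ j, j < m → |σ (j + 1)| = 1)
    (hσx : ∀ j, j < m → |dif N x (b (j + 1) - 1)| = σ (j + 1) * dif N x (b (j + 1) - 1)) :
    ∑ i, (x i - η (0, 0) N τ (x + z) i) ^ 2 ≤
      ∑ j ∈ Finset.range (m + 1), ∑ k, (η (σ j, -σ (j + 1)) _ τ (blk N b j z) k) ^ 2 := by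
  obtain ⟨e', he', hopt⟩ := block_common η hmin hb σ τ hτ z
  have h := prox_le (fun w => τ * (tvNorm N (x + w) - tvNorm N x))
    (fun w => τ * ∑ j ∈ Finset.range (m + 1), tvPen (σ j, -σ (j + 1)) _ (blk N b j w)) z
    (η (0, 0) N τ (x + z) - x) e' ?_ ?_ ?_ (err_min η hmin N τ hτ x z) hopt
  · rw [sum_blk hb (fun p _ => p ^ 2) e' e'] at h
    have e1 : ∑ i, (x i - η (0, 0) N τ (x + z) i) ^ 2 =
        ∑ i, ((η (0, 0) N τ (x + z) - x) i) ^ 2 :=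
      Finset.sum_congr rfl fun i _ => by simp only [Pi.sub_apply]; ring
    rw [e1]
    refine h.trans (le_of_eq (Finset.sum_congr rfl fun j hj => ?_))
    rw [he' j (by simpa [Nat.lt_succ_iff] using hj)]
  · intro t h0 h1
    set e := η (0, 0) N τ (x + z) - x
    have hx : x + (1 - t) • e = (1 - t) • (x + e) + t • x := by
      ext i; simp only [Pi.add_apply, Pi.smul_apply, smul_eq_mul]; ring
    have := tvNorm_add N ((1 - t) • (x + e)) (t • x)
    rw [tvNorm_smul, tvNorm_smul, abs_of_nonneg h0, abs_of_nonneg (by linarith : 0 ≤ 1 - t),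
      ← hx] at this
    have h2 : tvNorm N (x + (1 - t) • e) - tvNorm N x ≤ (1 - t) * (tvNorm N (x + e) - tvNorm N x) := by
      linarith
    have := mul_le_mul_of_nonneg_left h2 hτ
    linarith
  · intro t h0
    have : ∑ j ∈ Finset.range (m + 1), tvPen (σ j, -σ (j + 1)) _
          (blk N b j (e' + t • (η (0, 0) N τ (x + z) - x))) ≤
        ∑ j ∈ Finset.range (m + 1), tvPen (σ j, -σ (j + 1)) _ (blk N b j e') +
        t * ∑ j ∈ Finset.range (m + 1), tvPen (σ j, -σ (j + 1)) _
          (blk N b j (η (0, 0) N τ (x + z) - x)) := by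
      rw [Finset.mul_sum, ← Finset.sum_add_distrib]
      refine Finset.sum_le_sum fun j _ => ?_
      rw [blk_add, blk_smul, ← tvPen_smul _ _ t h0]
      exact tvPen_add _ _ _ _
    have := mul_le_mul_of_nonneg_left this hτ
    linarith
  · exact mul_le_mul_of_nonneg_left (pen_le hb σ hσ0 hσ1 x _ hin hσ hσx) hτ

lemma block_err_eq
    (hmin : ∀ (s : ℝ × ℝ) (N : ℕ) (τ : ℝ), 0 ≤ τ → ∀ y x : Fin N → ℝ,
      tvObj s N τ y (η s N τ y) ≤ tvObj s N τ y x)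
    {N m : ℕ} {b : ℕ → ℕ} (hb : IsBlocks N m b) (σ : ℕ → ℝ) (hσ0 : σ 0 = 0)
    (hσ1 : σ (m + 1) = 0) (τ : ℝ) (hτ : 0 ≤ τ) (x z : Fin N → ℝ)
    (hin : ∀ j, j ≤ m → ∀ k, k + 1 < b (j + 1) - b j → dif N x (b j + k) = 0)
    (hσ : ∀ j, j < m → |σ (j + 1)| = 1)
    (hσx : ∀ j, j < m → |dif N x (b (j + 1) - 1)| = σ (j + 1) * dif N x (b (j + 1) - 1))
    (K : ℝ) (hK : ∀ j, j < m → 2 * K ≤ |dif N x (b (j + 1) - 1)|)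
    (hzK : ∑ j ∈ Finset.range (m + 1), ∑ k, (η (σ j, -σ (j + 1)) _ τ (blk N b j z) k) ^ 2 ≤ K ^ 2)
    (hK0 : 0 ≤ K) :
    ∑ i, (x i - η (0, 0) N τ (x + z) i) ^ 2 =
      ∑ j ∈ Finset.range (m + 1), ∑ k, (η (σ j, -σ (j + 1)) _ τ (blk N b j z) k) ^ 2 := by
  obtain ⟨e', he', hopt⟩ := block_common η hmin hb σ τ hτ z
  have hsum : ∑ j ∈ Finset.range (m + 1), ∑ k, (η (σ j, -σ (j + 1)) _ τ (blk N b j z) k) ^ 2 =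
      ∑ i, (e' i) ^ 2 := by
    rw [sum_blk hb (fun p _ => p ^ 2) e' e']
    refine Finset.sum_congr rfl fun j hj => ?_
    rw [he' j (by simpa [Nat.lt_succ_iff] using hj)]
  rw [hsum] at hzK ⊢
  have hcoord : ∀ i, |extz N e' i| ≤ K := by
    intro i
    unfold extz
    split_ifs with h
    · apply abs_le_of_sq_le_sq _ hK0
      exact (Finset.single_le_sum (f := fun i => (e' i) ^ 2) (fun i _ => sq_nonneg _)
        (Finset.mem_univ _)).trans hzK
    · simpa using hK0
  have hpe := pen_eq hb σ hσ0 hσ1 x e' hin hσ hσx (fun j hj => by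
    refine le_trans ?_ (hK j hj)
    unfold dif
    refine (abs_sub _ _).trans ?_
    have := hcoord (b (j + 1) - 1 + 1)
    have := hcoord (b (j + 1) - 1)
    linarith)
  have heq : η (0, 0) N τ (x + z) - x = e' := by
    refine prox_unique (fun w => τ * (tvNorm N (x + w) - tvNorm N x)) z _ _ ?_
      (err_min η hmin N τ hτ x z) ?_
    · set e := η (0, 0) N τ (x + z) - x
      have hx : x + (1 / 2 : ℝ) • (e + e') = (1 / 2 : ℝ) • ((x + e) + (x + e')) := by
        ext i; simp only [Pi.add_apply, Pi.smul_apply, smul_eq_mul]; ring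
      have := tvNorm_add N (x + e) (x + e')
      rw [hx, tvNorm_smul, abs_of_nonneg (by norm_num)]
      have := mul_le_mul_of_nonneg_left this hτ
      linarith
    · intro w
      rw [← hpe]
      refine (hopt w).trans ?_
      have := mul_le_mul_of_nonneg_left (pen_le hb σ hσ0 hσ1 x w hin hσ hσx) hτ
      linarith
  rw [← heq]
  exact Finset.sum_congr rfl fun i _ => by simp only [Pi.sub_apply]; ring

end

/-! ### Combinatorics of change points -/

lemma changeCount_eq (N : ℕ) (x : Fin N → ℝ) :
    changeCount N x = ∑ i ∈ Finset.range (N - 1), if dif N x i ≠ 0 then 1 else 0 := by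
  classical
  rw [← Finset.card_filter]
  unfold changeCount
  have hc : Nat.card {i // i ∈ (Finset.range (N - 1)).filter fun i => dif N x i ≠ 0} =
      ((Finset.range (N - 1)).filter fun i => dif N x i ≠ 0).card := by
    rw [Nat.card_eq_fintype_card, Fintype.card_coe]
  rw [← hc]
  refine Nat.card_congr ⟨fun p => ⟨p.1.1, ?_⟩, fun i => ⟨(⟨i.1, ?_⟩, ⟨i.1 + 1, ?_⟩), ?_⟩, ?_, ?_⟩
  · have h1 := p.2.1
    have h2 := p.2.2
    have h3 := p.1.2.2
    simp only [Finset.mem_filter, Finset.mem_range]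
    refine ⟨by omega, ?_⟩
    unfold dif
    rw [h1, extz_fin, extz_fin]
    intro h; exact h2 (by linarith)
  · have := i.2
    simp only [Finset.mem_filter, Finset.mem_range] at this
    omega
  · have := i.2
    simp only [Finset.mem_filter, Finset.mem_range] at this
    omega
  · have := i.2
    simp only [Finset.mem_filter, Finset.mem_range] at this
    refine ⟨rfl, ?_⟩
    have h := this.2
    unfold dif at h
    rw [extz_lt _ _ _ (by omega), extz_lt _ _ _ (by omega)] at h
    intro h'; apply h; simp only at h'; rw [h']; ring
  · intro p
    have h1 := p.2.1
    ext <;> simp [h1]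
  · intro i
    ext; simp

lemma exists_blocks (P : ℕ → Prop) (N : ℕ) (hN : 1 ≤ N) :
    ∃ (m : ℕ) (b : ℕ → ℕ), IsBlocks N m b ∧ (∀ j, j < m → P (b (j + 1) - 1)) ∧
      (∀ j, j ≤ m → ∀ k, k + 1 < b (j + 1) - b j → ¬ P (b j + k)) := by
  classical
  induction N, hN using Nat.le_induction with
  | base =>
    refine ⟨0, id, ⟨rfl, rfl, fun j hj => by simp⟩, fun j hj => by omega, fun j hj k hk => ?_⟩
    simp at hk
  | succ N hN ih =>
    obtain ⟨m, b, hb, h1, h2⟩ := ih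
    by_cases hP : P (N - 1)
    · have hb' : ∀ j, j ≤ m + 1 → (if j ≤ m + 1 then b j else N + 1) = b j := fun j hj => if_pos hj
      have hl : (if m + 1 + 1 ≤ m + 1 then b (m + 1 + 1) else N + 1) = N + 1 := if_neg (by omega)
      refine ⟨m + 1, fun j => if j ≤ m + 1 then b j else N + 1, ⟨?_, ?_, ?_⟩, ?_, ?_⟩
      · simp [hb.zero]
      · simp
      · intro j hj
        rcases Nat.lt_or_ge j (m + 1) with h | h
        · simp only [hb' j hj, hb' (j + 1) (by omega)]
          exact hb.lt j (by omega)
        · obtain rfl : j = m + 1 := by omega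
          simp only [hl, le_refl, if_true, hb.last]
          omega
      · intro j hj
        simp only [hb' (j + 1) (by omega)]
        rcases Nat.lt_or_ge j m with h | h
        · exact h1 j h
        · obtain rfl : j = m := by omega
          rw [hb.last]; exact hP
      · intro j hj k hk
        rcases Nat.lt_or_ge j (m + 1) with h | h
        · simp only [hb' j hj, hb' (j + 1) (by omega)] at hk ⊢
          exact h2 j (by omega) k hk
        · obtain rfl : j = m + 1 := by omega
          simp only [hl, le_refl, if_true, hb.last] at hk
          omega
    · have hb' : ∀ j, j ≤ m → (if j ≤ m then b j else N + 1) = b j := fun j hj => if_pos hj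
      have hl : (if m + 1 ≤ m then b (m + 1) else N + 1) = N + 1 := if_neg (by omega)
      have hm := hb.lt m le_rfl
      rw [hb.last] at hm
      refine ⟨m, fun j => if j ≤ m then b j else N + 1, ⟨?_, ?_, ?_⟩, ?_, ?_⟩
      · simp [hb.zero]
      · simp
      · intro j hj
        rcases Nat.lt_or_ge j m with h | h
        · simp only [hb' j hj, hb' (j + 1) (by omega)]
          exact hb.lt j (by omega)
        · obtain rfl : j = m := by omega
          simp only [hb' _ hj, hl]
          omega
      · intro j hj
        simp only [hb' (j + 1) (by omega)]
        exact h1 j hj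
      · intro j hj k hk
        rcases Nat.lt_or_ge j m with h | h
        · simp only [hb' j hj, hb' (j + 1) (by omega)] at hk ⊢
          exact h2 j (by omega) k hk
        · obtain rfl : j = m := by omega
          simp only [hb' _ hj, hl] at hk ⊢
          by_cases hk' : k + 1 < N - b j
          · exact h2 j le_rfl k (by rw [hb.last]; exact hk')
          · rwa [show b j + k = N - 1 by omega]

lemma changeCount_blocks {N m : ℕ} {b : ℕ → ℕ} (hb : IsBlocks N m b) (x : Fin N → ℝ)
    (hin : ∀ j, j ≤ m → ∀ k, k + 1 < b (j + 1) - b j → dif N x (b j + k) = 0)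
    (hbd : ∀ j, j < m → dif N x (b (j + 1) - 1) ≠ 0) :
    changeCount N x = m := by
  rw [changeCount_eq]
  have h2 := sum_blocks_sub (fun i => if dif N x i ≠ 0 then 1 else 0) b hb.zero m hb.lt
  rw [hb.last] at h2
  rw [h2, Finset.sum_eq_zero, zero_add]
  · rw [Finset.sum_congr rfl (g := fun _ => 1)]
    · simp
    · intro j hj
      rw [if_pos (hbd j (Finset.mem_range.1 hj))]
  · intro j hj
    refine Finset.sum_eq_zero fun k hk => ?_
    have := Finset.mem_range.1 hk
    have := Finset.mem_range.1 hj
    rw [if_neg]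
    rw [not_not]
    exact hin j (by omega) k (by omega)

lemma IsBlocks.mono {N m : ℕ} {b : ℕ → ℕ} (hb : IsBlocks N m b) (p q : ℕ) (hpq : p < q)
    (hq : q ≤ m + 1) : b p < b q := by
  induction q, hpq using Nat.le_induction with
  | base => exact hb.lt p (by omega)
  | succ q h ih => exact (ih (by omega)).trans (hb.lt q (by omega))

lemma IsBlocks.mono_le {N m : ℕ} {b : ℕ → ℕ} (hb : IsBlocks N m b) (p q : ℕ) (hpq : p ≤ q)
    (hq : q ≤ m + 1) : b p ≤ b q := by
  rcases hpq.lt_or_eq with h | h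
  · exact (hb.mono p q h hq).le
  · rw [h]

lemma IsBlocks.le {N m : ℕ} {b : ℕ → ℕ} (hb : IsBlocks N m b) (q : ℕ)
    (hq : q ≤ m + 1) : b q ≤ N := by
  have := hb.mono_le q (m + 1) hq le_rfl
  rwa [hb.last] at this

lemma segOK_len {L N m : ℕ} {b : ℕ → ℕ} (hb : IsBlocks N m b) (x : Fin N → ℝ)
    (hin : ∀ j, j ≤ m → ∀ k, k + 1 < b (j + 1) - b j → dif N x (b j + k) = 0)
    (hs : segOK L N x) (j : ℕ) (hj : j ≤ m) : b (j + 1) - b j ≤ L := by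
  by_contra h
  push Not at h
  have h1 := hb.le (j + 1) (by omega)
  obtain ⟨i, hi1, hi2, hi3⟩ := hs (b j) (by omega)
  have := hin j hj (i - b j) (by omega)
  unfold dif at this
  rw [show b j + (i - b j) = i by omega] at this
  exact hi3 (by linarith)

lemma segOK_of_len {L N m : ℕ} {b : ℕ → ℕ} (hb : IsBlocks N m b) (x : Fin N → ℝ)
    (hbd : ∀ j, j < m → dif N x (b (j + 1) - 1) ≠ 0)
    (hlen : ∀ j, j ≤ m → b (j + 1) - b j ≤ L) : segOK L N x := by
  intro i hi
  have hex : ∃ j, i < b (j + 1) := ⟨m, by rw [hb.last]; omega⟩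
  classical
  let j := Nat.find hex
  have hj1 : i < b (j + 1) := Nat.find_spec hex
  have hjm : j ≤ m := Nat.find_min' hex (by rw [hb.last]; omega)
  have hj2 : b j ≤ i := by
    rcases Nat.eq_zero_or_pos j with h | h
    · rw [h, hb.zero]; omega
    · have := Nat.find_min hex (m := j - 1) (by omega)
      rw [show j - 1 + 1 = j by omega] at this
      omega
  have hl := hlen j hjm
  have hjm' : j < m := by
    rcases hjm.lt_or_eq with h | h
    · exact h
    · rw [h, hb.last] at hl
      rw [h] at hj2
      omega
  refine ⟨b (j + 1) - 1, by omega, by omega, ?_⟩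
  have := hbd j hjm'
  unfold dif at this
  intro h; apply this; rw [h]; ring

/-- The staircase vector with jump `σ (j+1)` at the position `b (j+1)`. -/
def stair (N m : ℕ) (b : ℕ → ℕ) (σ : ℕ → ℝ) : Fin N → ℝ :=
  fun i => ∑ j ∈ Finset.range m, if b (j + 1) ≤ (i : ℕ) then σ (j + 1) else 0

lemma dif_stair (N m : ℕ) (b : ℕ → ℕ) (σ : ℕ → ℝ) (i : ℕ) (hi : i + 1 < N) :
    dif N (stair N m b σ) i = ∑ j ∈ Finset.range m, if b (j + 1) = i + 1 then σ (j + 1) else 0 := by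
  unfold dif
  rw [extz_lt _ _ _ hi, extz_lt _ _ _ (by omega : i < N)]
  unfold stair
  rw [← Finset.sum_sub_distrib]
  refine Finset.sum_congr rfl fun j _ => ?_
  simp only []
  split_ifs <;> first | omega | simp

lemma stair_in {N m : ℕ} {b : ℕ → ℕ} (hb : IsBlocks N m b) (σ : ℕ → ℝ) :
    ∀ j, j ≤ m → ∀ k, k + 1 < b (j + 1) - b j → dif N (stair N m b σ) (b j + k) = 0 := by
  intro j hj k hk
  have h1 := hb.le (j + 1) (by omega)
  rw [dif_stair _ _ _ _ _ (by omega)]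
  refine Finset.sum_eq_zero fun p hp => ?_
  have hp := Finset.mem_range.1 hp
  rw [if_neg]
  intro h
  rcases Nat.lt_or_ge p j with h' | h'
  · have := hb.mono_le (p + 1) j (by omega) (by omega)
    omega
  · have := hb.mono_le (j + 1) (p + 1) (by omega) (by omega)
    omega

lemma stair_bd {N m : ℕ} {b : ℕ → ℕ} (hb : IsBlocks N m b) (σ : ℕ → ℝ) :
    ∀ j, j < m → dif N (stair N m b σ) (b (j + 1) - 1) = σ (j + 1) := by
  intro j hj
  have h0 := hb.lt j (by omega)
  have h1 := hb.mono (j + 1) (m + 1) (by omega) (by omega)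
  rw [hb.last] at h1
  rw [dif_stair _ _ _ _ _ (by omega), show b (j + 1) - 1 + 1 = b (j + 1) by omega,
    Finset.sum_eq_single j]
  · simp
  · intro p hp hne
    have hp := Finset.mem_range.1 hp
    rw [if_neg]
    intro h
    rcases Nat.lt_or_gt_of_ne hne with h' | h'
    · have := hb.mono (p + 1) (j + 1) (by omega) (by omega)
      omega
    · have := hb.mono (j + 1) (p + 1) (by omega) (by omega)
      omega
  · intro h; exact absurd (Finset.mem_range.2 hj) h

/-! ### Gaussian integrals -/

lemma stdGaussian_map_inj {N l : ℕ} (f : Fin l → Fin N) (hf : Function.Injective f) :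
    Measure.map (fun (z : Fin N → ℝ) (k : Fin l) => z (f k)) (_root_.stdGaussian N) =
      _root_.stdGaussian l := by
  have hm : Measurable (fun (z : Fin N → ℝ) (k : Fin l) => z (f k)) :=
    measurable_pi_lambda _ fun k => measurable_pi_apply _
  unfold _root_.stdGaussian
  refine (Measure.pi_eq fun s hs => ?_).symm
  rw [Measure.map_apply hm (MeasurableSet.univ_pi hs)]
  have hpre : (fun (z : Fin N → ℝ) (k : Fin l) => z (f k)) ⁻¹' (Set.univ.pi s) =
      Set.univ.pi (fun i : Fin N => ⋂ (k : Fin l) (_ : f k = i), s k) := by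
    ext z
    simp only [Set.mem_preimage, Set.mem_univ_pi, Set.mem_iInter]
    constructor
    · intro h i k hk
      rw [← hk]; exact h k
    · intro h k
      exact h (f k) k rfl
  rw [hpre, Measure.pi_pi]
  symm
  refine Fintype.prod_of_injective f hf _ _ ?_ ?_
  · intro i hi
    have : (⋂ (k : Fin l) (_ : f k = i), s k) = Set.univ := by
      ext y
      simp only [Set.mem_iInter, Set.mem_univ, iff_true]
      intro k hk
      exact absurd ⟨k, hk⟩ hi
    rw [this, measure_univ]
  · intro k
    congr 1
    ext y
    simp only [Set.mem_iInter]
    constructor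
    · intro h k' hk'
      rw [hf hk']; exact h
    · intro h; exact h k rfl

instance (N : ℕ) : IsProbabilityMeasure (_root_.stdGaussian N) := by
  unfold _root_.stdGaussian; infer_instance

lemma measurable_extz (N : ℕ) (i : ℕ) : Measurable fun u : Fin N → ℝ => extz N u i := by
  unfold extz
  by_cases h : i < N
  · simp only [h, dif_pos]; exact measurable_pi_apply _
  · simp only [h, dif_neg, not_false_eq_true]; exact measurable_const

lemma measurable_blk (N : ℕ) (b : ℕ → ℕ) (j : ℕ) : Measurable (blk N b j) :=
  measurable_pi_lambda _ fun _ => measurable_extz N _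

lemma stdGaussian_map_blk {N m : ℕ} {b : ℕ → ℕ} (hb : IsBlocks N m b) (j : ℕ) (hj : j ≤ m) :
    Measure.map (blk N b j) (_root_.stdGaussian N) = _root_.stdGaussian (b (j + 1) - b j) := by
  have h1 := hb.le (j + 1) (by omega)
  have h2 : ∀ k : Fin (b (j + 1) - b j), b j + k < N := fun k => by have := k.2; omega
  rw [← stdGaussian_map_inj (fun k : Fin (b (j + 1) - b j) => (⟨b j + k, h2 k⟩ : Fin N))]
  · congr 1
    funext u k
    unfold blk
    rw [extz_lt _ _ _ (h2 k)]
  · intro k k' h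
    simp only [Fin.mk.injEq] at h
    ext; omega

lemma stdGaussian_map_neg (N : ℕ) :
    Measure.map (fun z : Fin N → ℝ => -z) (_root_.stdGaussian N) = _root_.stdGaussian N := by
  unfold _root_.stdGaussian
  have hg : Measure.map (fun x : ℝ => -x) (gaussianReal 0 1) = gaussianReal 0 1 := by
    rw [gaussianReal_map_neg, neg_zero]
  have : ∀ i : Fin N, SigmaFinite (Measure.map (fun x : ℝ => -x) (gaussianReal 0 1)) := by
    intro i; rw [hg]; infer_instance
  have h := Measure.pi_map_pi (ι := Fin N) (μ := fun _ => gaussianReal 0 1)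
    (f := fun _ (x : ℝ) => -x) (fun i => by fun_prop)
  rw [hg] at h
  exact h

lemma lintegral_gauss_sq (c : ℝ) :
    ∫⁻ x, ENNReal.ofReal ((x - c) ^ 2) ∂(gaussianReal 0 1) = ENNReal.ofReal (1 + c ^ 2) := by
  have hL : MemLp (fun x : ℝ => x) 2 (gaussianReal 0 1) := by
    have := memLp_id_gaussianReal (μ := 0) (v := 1) 2
    exact_mod_cast this
  have hint2 : Integrable (fun x : ℝ => x ^ 2) (gaussianReal 0 1) := hL.integrable_sq
  have hint1 : Integrable (fun x : ℝ => x) (gaussianReal 0 1) := hL.integrable (by norm_num)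
  have hexp : (fun x : ℝ => (x - c) ^ 2) = fun x => (x ^ 2 - 2 * c * x) + c ^ 2 := by
    funext x; ring
  have hsq : ∫ x, x ^ 2 ∂(gaussianReal 0 1) = 1 := by
    have h := variance_fun_id_gaussianReal (μ := 0) (v := 1)
    rw [variance_eq_integral measurable_id'.aemeasurable, integral_id_gaussianReal] at h
    simpa using h
  rw [← ofReal_integral_eq_lintegral_ofReal]
  · congr 1
    have hsub : Integrable (fun x : ℝ => x ^ 2 - 2 * c * x) (gaussianReal 0 1) :=
      hint2.sub (hint1.const_mul _)
    rw [hexp, integral_add hsub (integrable_const _),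
      integral_sub hint2 (hint1.const_mul _), integral_const_mul, integral_id_gaussianReal, hsq]
    simp
  · rw [hexp]
    exact (hint2.sub (hint1.const_mul _)).add (integrable_const _)
  · exact Filter.Eventually.of_forall fun x => sq_nonneg _

lemma lintegral_std_sq (N : ℕ) (c : Fin N → ℝ) :
    ∫⁻ z, ENNReal.ofReal (∑ i, (z i - c i) ^ 2) ∂(_root_.stdGaussian N) =
      ∑ i, ENNReal.ofReal (1 + (c i) ^ 2) := by
  simp_rw [ENNReal.ofReal_sum_of_nonneg (fun i _ => sq_nonneg _)]
  rw [lintegral_finsetSum _ (fun i _ => by fun_prop)]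
  refine Finset.sum_congr rfl fun i _ => ?_
  rw [← lintegral_gauss_sq (c i)]
  exact (measurePreserving_eval (fun _ : Fin N => gaussianReal 0 1) i).lintegral_comp
    (f := fun x => ENNReal.ofReal ((x - c i) ^ 2)) (by fun_prop)

section
variable (η : (ℝ × ℝ) → ∀ N : ℕ, ℝ → (Fin N → ℝ) → (Fin N → ℝ))

lemma measurable_eta_sq (hmeas : ∀ s N τ, Measurable (η s N τ)) (s : ℝ × ℝ) (N : ℕ) (τ : ℝ) :
    Measurable fun z => ENNReal.ofReal (∑ i, (η s N τ z i) ^ 2) := by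
  have := hmeas s N τ
  have h : ∀ i, Measurable fun z => η s N τ z i := fun i => (measurable_pi_apply i).comp this
  fun_prop

lemma lintegral_blocks (hmeas : ∀ s N τ, Measurable (η s N τ))
    {N m : ℕ} {b : ℕ → ℕ} (hb : IsBlocks N m b) (σ : ℕ → ℝ) (τ : ℝ) :
    ∫⁻ z, ENNReal.ofReal (∑ j ∈ Finset.range (m + 1),
        ∑ k, (η (σ j, -σ (j + 1)) _ τ (blk N b j z) k) ^ 2) ∂(_root_.stdGaussian N) =
      ∑ j ∈ Finset.range (m + 1), tvRiskZero η (σ j, -σ (j + 1)) (b (j + 1) - b j) τ := by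
  simp_rw [ENNReal.ofReal_sum_of_nonneg (s := Finset.range (m + 1))
    (fun j _ => Finset.sum_nonneg fun k _ => sq_nonneg _)]
  have hme : ∀ j, Measurable fun z => ENNReal.ofReal
      (∑ k, (η (σ j, -σ (j + 1)) _ τ (blk N b j z) k) ^ 2) := fun j =>
    (measurable_eta_sq η hmeas (σ j, -σ (j + 1)) _ τ).comp (measurable_blk N b j)
  rw [lintegral_finsetSum _ (fun j _ => hme j)]
  refine Finset.sum_congr rfl fun j hj => ?_
  unfold tvRiskZero
  rw [← stdGaussian_map_blk hb j (by simpa [Nat.lt_succ_iff] using hj),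
    lintegral_map (measurable_eta_sq η hmeas _ _ τ) (measurable_blk N b j)]

lemma tvRiskZero_neg (hmeas : ∀ s N τ, Measurable (η s N τ))
    (hmin : ∀ (s : ℝ × ℝ) (N : ℕ) (τ : ℝ), 0 ≤ τ → ∀ y x : Fin N → ℝ,
      tvObj s N τ y (η s N τ y) ≤ tvObj s N τ y x)
    (s : ℝ × ℝ) (l : ℕ) (τ : ℝ) (hτ : 0 ≤ τ) :
    tvRiskZero η (-s) l τ = tvRiskZero η s l τ := by
  unfold tvRiskZero
  conv_rhs => rw [← stdGaussian_map_neg l]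
  rw [lintegral_map (measurable_eta_sq η hmeas _ _ τ) measurable_neg]
  refine lintegral_congr fun z => ?_
  rw [eta_neg η hmin s l τ hτ z]
  simp

lemma tvRiskZero_le
    (hmin : ∀ (s : ℝ × ℝ) (N : ℕ) (τ : ℝ), 0 ≤ τ → ∀ y x : Fin N → ℝ,
      tvObj s N τ y (η s N τ y) ≤ tvObj s N τ y x)
    (s : ℝ × ℝ) (hs1 : |s.1| ≤ 1) (hs2 : |s.2| ≤ 1) (l : ℕ) (τ : ℝ) (hτ : 0 ≤ τ) :
    tvRiskZero η s l τ ≤ ENNReal.ofReal (l * (1 + 4 * τ ^ 2)) := by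
  unfold tvRiskZero
  refine (lintegral_mono fun z => ENNReal.ofReal_le_ofReal (eta_sq_le η hmin s l τ hτ z)).trans ?_
  rw [lintegral_std_sq l (fun i : Fin l => τ * ((if (i : ℕ) = 0 then s.1 else 0) +
      (if (i : ℕ) = l - 1 then s.2 else 0))),
    ← ENNReal.ofReal_sum_of_nonneg (fun i _ => by positivity)]
  apply ENNReal.ofReal_le_ofReal
  calc _ ≤ ∑ i : Fin l, (1 + 4 * τ ^ 2) := ?_
    _ = _ := by rw [Finset.sum_const, Finset.card_univ, Fintype.card_fin, nsmul_eq_mul]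
  refine Finset.sum_le_sum fun i _ => ?_
  have h : |(if (i : ℕ) = 0 then s.1 else 0) + (if (i : ℕ) = l - 1 then s.2 else 0)| ≤ 2 := by
    refine (abs_add_le _ _).trans ?_
    have h1 : |if (i : ℕ) = 0 then s.1 else 0| ≤ 1 := by split_ifs <;> simp [hs1]
    have h2 : |if (i : ℕ) = l - 1 then s.2 else 0| ≤ 1 := by split_ifs <;> simp [hs2]
    linarith
  have h' := sq_le_sq' (by linarith [(abs_le.1 h).1]) (abs_le.1 h).2
  rw [mul_pow]
  nlinarith [sq_nonneg τ]

lemma tvRiskZero_one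
    (hmin : ∀ (s : ℝ × ℝ) (N : ℕ) (τ : ℝ), 0 ≤ τ → ∀ y x : Fin N → ℝ,
      tvObj s N τ y (η s N τ y) ≤ tvObj s N τ y x) (τ : ℝ) (hτ : 0 ≤ τ) :
    tvRiskZero η (1, 1) 1 τ = ENNReal.ofReal (1 + 4 * τ ^ 2) := by
  have h : ∀ z : Fin 1 → ℝ, η (1, 1) 1 τ z 0 = z 0 - 2 * τ := by
    intro z
    have := hmin (1, 1) 1 τ hτ z (fun _ => z 0 - 2 * τ)
    simp [tvObj, tvNorm, extz] at this
    have h2 : (η (1, 1) 1 τ z 0 - (z 0 - 2 * τ)) ^ 2 ≤ 0 := by nlinarith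
    have := pow_eq_zero_iff (two_ne_zero) |>.1 (le_antisymm h2 (sq_nonneg _))
    linarith
  unfold tvRiskZero
  have h2 := lintegral_std_sq 1 (fun _ => 2 * τ)
  simp only [Fin.sum_univ_one, Fin.isValue] at h2
  simp only [Fin.sum_univ_one, Fin.isValue, h, h2]
  congr 1; ring

/-- Risk at a fixed signal. -/
def riskAt (N : ℕ) (τ : ℝ) (x : Fin N → ℝ) : ℝ≥0∞ :=
  ∫⁻ z, ENNReal.ofReal (∑ i, (x i - η (0, 0) N τ (x + z) i) ^ 2) ∂(_root_.stdGaussian N)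

lemma riskAt_le (hmeas : ∀ s N τ, Measurable (η s N τ))
    (hmin : ∀ (s : ℝ × ℝ) (N : ℕ) (τ : ℝ), 0 ≤ τ → ∀ y x : Fin N → ℝ,
      tvObj s N τ y (η s N τ y) ≤ tvObj s N τ y x)
    {N m : ℕ} {b : ℕ → ℕ} (hb : IsBlocks N m b) (σ : ℕ → ℝ) (hσ0 : σ 0 = 0)
    (hσ1 : σ (m + 1) = 0) (τ : ℝ) (hτ : 0 ≤ τ) (x : Fin N → ℝ)
    (hin : ∀ j, j ≤ m → ∀ k, k + 1 < b (j + 1) - b j → dif N x (b j + k) = 0)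
    (hσ : ∀ j, j < m → |σ (j + 1)| = 1)
    (hσx : ∀ j, j < m → |dif N x (b (j + 1) - 1)| = σ (j + 1) * dif N x (b (j + 1) - 1)) :
    riskAt η N τ x ≤
      ∑ j ∈ Finset.range (m + 1), tvRiskZero η (σ j, -σ (j + 1)) (b (j + 1) - b j) τ := by
  rw [← lintegral_blocks η hmeas hb]
  exact lintegral_mono fun z => ENNReal.ofReal_le_ofReal
    (block_err_le η hmin hb σ hσ0 hσ1 τ hτ x z hin hσ hσx)

lemma le_iSup_riskAt (hmeas : ∀ s N τ, Measurable (η s N τ))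
    (hmin : ∀ (s : ℝ × ℝ) (N : ℕ) (τ : ℝ), 0 ≤ τ → ∀ y x : Fin N → ℝ,
      tvObj s N τ y (η s N τ y) ≤ tvObj s N τ y x)
    {N m : ℕ} {b : ℕ → ℕ} (hb : IsBlocks N m b) (σ : ℕ → ℝ) (hσ0 : σ 0 = 0)
    (hσ1 : σ (m + 1) = 0) (τ : ℝ) (hτ : 0 ≤ τ)
    (hσ : ∀ j, j < m → |σ (j + 1)| = 1) :
    ∑ j ∈ Finset.range (m + 1), tvRiskZero η (σ j, -σ (j + 1)) (b (j + 1) - b j) τ ≤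
      ⨆ n : ℕ, riskAt η N τ ((2 * ((n : ℝ) + 1)) • stair N m b σ) := by
  rw [← lintegral_blocks η hmeas hb]
  set S : (Fin N → ℝ) → ℝ := fun z => ∑ j ∈ Finset.range (m + 1),
        ∑ k, (η (σ j, -σ (j + 1)) _ τ (blk N b j z) k) ^ 2 with hS
  have hSm : Measurable S := by
    have h : ∀ j, ∀ k, Measurable fun z => η (σ j, -σ (j + 1)) _ τ (blk N b j z) k := fun j k =>
      (measurable_pi_apply k).comp ((hmeas _ _ _).comp (measurable_blk N b j))
    exact Finset.measurable_sum _ fun j _ => Finset.measurable_sum _ fun k _ => (h j k).pow_const 2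
  have hS0 : ∀ z, 0 ≤ S z := fun z =>
    Finset.sum_nonneg fun j _ => Finset.sum_nonneg fun k _ => sq_nonneg _
  have hsup : ∀ z, ENNReal.ofReal (S z) =
      ⨆ n : ℕ, Set.indicator {z | S z ≤ ((n : ℝ) + 1) ^ 2} (fun z => ENNReal.ofReal (S z)) z := by
    intro z
    apply le_antisymm
    · obtain ⟨n, hn⟩ := exists_nat_ge (S z)
      refine le_iSup_of_le n ?_
      rw [Set.indicator_of_mem]
      simp only [Set.mem_ofPred_eq]
      have : (0 : ℝ) ≤ n := Nat.cast_nonneg n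
      nlinarith
    · exact iSup_le fun n => Set.indicator_le_self' (fun _ _ => zero_le) z
  change ∫⁻ z, ENNReal.ofReal (S z) ∂_ ≤ _
  rw [lintegral_congr hsup, lintegral_iSup]
  · refine iSup_mono fun n => ?_
    refine lintegral_mono fun z => ?_
    by_cases hz : S z ≤ ((n : ℝ) + 1) ^ 2
    · rw [Set.indicator_of_mem (by exact hz)]
      apply le_of_eq
      congr 1
      have hn : (0 : ℝ) ≤ n := Nat.cast_nonneg n
      rw [block_err_eq η hmin hb σ hσ0 hσ1 τ hτ ((2 * ((n : ℝ) + 1)) • stair N m b σ) z ?_ hσ ?_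
        ((n : ℝ) + 1) ?_ hz (by positivity)]
      · intro j hj k hk
        rw [dif_smul, stair_in hb σ j hj k hk, mul_zero]
      · intro j hj
        rw [dif_smul, stair_bd hb σ j hj, abs_mul, hσ j hj, abs_of_nonneg (by positivity)]
        have : σ (j + 1) * σ (j + 1) = 1 := by
          rw [← abs_mul_abs_self, hσ j hj, one_mul]
        linear_combination (-(2 * ((n : ℝ) + 1))) * this
      · intro j hj
        rw [dif_smul, stair_bd hb σ j hj, abs_mul, hσ j hj, abs_of_nonneg (by positivity), mul_one]
    · rw [Set.indicator_of_notMem (by exact hz)]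
      exact zero_le
  · intro n
    exact (hSm.ennreal_ofReal).indicator (measurableSet_le hSm measurable_const)
  · intro n n' hnn' z
    refine Set.indicator_le_indicator_of_subset ?_ (fun _ => zero_le) z
    intro z hz
    simp only [Set.mem_ofPred_eq] at hz ⊢
    refine hz.trans ?_
    have : (n : ℝ) ≤ n' := by exact_mod_cast hnn'
    gcongr

end

/-! ### The linear program -/

lemma lp_dual (r : ℕ → ℝ) (L : ℕ) (μ h : ℝ) (hμ1 : 1 < μ) (hμL : μ ≤ L)
    (h2 : ∀ l1 l2 : ℕ, 1 ≤ l1 → l2 ≤ L → (l1 : ℝ) < μ → μ < l2 →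
      (l2 - μ) * r l1 + (μ - l1) * r l2 ≤ (l2 - l1) * h)
    (h1 : ∀ l : ℕ, 1 ≤ l → l ≤ L → (l : ℝ) = μ → r l ≤ h) :
    ∃ A B : ℝ, A * μ + B = h ∧ ∀ l : ℕ, 1 ≤ l → l ≤ L → r l ≤ A * l + B := by
  classical
  set S : Finset ℕ := (Finset.Icc 1 L).filter fun l => (l : ℝ) < μ with hS
  have hL1 : 1 ≤ L := by
    have : (1 : ℝ) < L := lt_of_lt_of_le hμ1 hμL
    exact_mod_cast this.le
  have hne : S.Nonempty := ⟨1, by simp [hS, hL1, hμ1]⟩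
  obtain ⟨l0, hl0, hmin⟩ := S.exists_min_image (fun l => (h - r l) / (μ - l)) hne
  simp only [hS, Finset.mem_filter, Finset.mem_Icc] at hl0 hmin
  set A := (h - r l0) / (μ - l0) with hA
  have hpos : 0 < μ - l0 := by linarith [hl0.2]
  have hAe : A * (μ - l0) = h - r l0 := by rw [hA]; field_simp
  refine ⟨A, h - A * μ, by ring, fun l hl hlL => ?_⟩
  rcases lt_trichotomy (l : ℝ) μ with hlt | heq | hgt
  · have := hmin l ⟨⟨hl, hlL⟩, hlt⟩
    rw [le_div_iff₀ (by linarith)] at this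
    linarith
  · have := h1 l hl hlL heq
    rw [heq]; linarith
  · have := h2 l0 l hl0.1.1 hlL hl0.2 hgt
    have h3 : (μ - l0) * r l ≤ (μ - l0) * (A * l + (h - A * μ)) := by
      have e : (μ - l0) * (A * l + (h - A * μ)) = (A * (μ - l0)) * (l - μ) + (μ - l0) * h := by ring
      rw [e, hAe]
      linarith
    exact le_of_mul_le_mul_left h3 hpos

lemma ofReal_split {x A B : ℝ} (hx : 0 ≤ x) (l : ℕ) (h : x ≤ A * l + B) :
    ENNReal.ofReal x + ENNReal.ofReal (-A) * l + ENNReal.ofReal (-B) ≤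
      ENNReal.ofReal A * l + ENNReal.ofReal B := by
  have hl : (0 : ℝ) ≤ l := Nat.cast_nonneg l
  have e : ∀ t : ℝ, ENNReal.ofReal t = ENNReal.ofReal (max t 0) := by
    intro t
    rcases le_total t 0 with h | h
    · rw [max_eq_right h, ENNReal.ofReal_of_nonpos h, ENNReal.ofReal_zero]
    · rw [max_eq_left h]
  rw [e (-A), e (-B), e A, e B, ← ENNReal.ofReal_natCast, ← ENNReal.ofReal_mul (by positivity),
    ← ENNReal.ofReal_mul (by positivity), ← ENNReal.ofReal_add hx (by positivity),
    ← ENNReal.ofReal_add (by positivity) (by positivity),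
    ← ENNReal.ofReal_add (by positivity) (by positivity)]
  apply ENNReal.ofReal_le_ofReal
  have h1 : max A 0 - max (-A) 0 = A := by
    rcases le_total A 0 with h | h
    · rw [max_eq_right h, max_eq_left (by linarith)]; ring
    · rw [max_eq_left h, max_eq_right (by linarith)]; ring
  have h2 : max B 0 - max (-B) 0 = B := by
    rcases le_total B 0 with h | h
    · rw [max_eq_right h, max_eq_left (by linarith)]; ring
    · rw [max_eq_left h, max_eq_right (by linarith)]; ring
  have h3 : x ≤ (max A 0 - max (-A) 0) * l + (max B 0 - max (-B) 0) := by rw [h1, h2]; exact h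
  linarith

lemma le_of_split {T : ℝ≥0∞} {A B μ : ℝ} (hμ : 0 ≤ μ)
    (h : T + ENNReal.ofReal (-A) * ENNReal.ofReal μ + ENNReal.ofReal (-B) ≤
      ENNReal.ofReal A * ENNReal.ofReal μ + ENNReal.ofReal B) :
    T ≤ ENNReal.ofReal (A * μ + B) := by
  have hT : T ≠ ⊤ := by
    intro hT
    rw [hT, top_add, top_add, top_le_iff] at h
    exact (ENNReal.add_ne_top.2 ⟨ENNReal.mul_ne_top ENNReal.ofReal_ne_top ENNReal.ofReal_ne_top,
      ENNReal.ofReal_ne_top⟩) h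
  have e : ∀ t : ℝ, ENNReal.ofReal t = ENNReal.ofReal (max t 0) := by
    intro t
    rcases le_total t 0 with h | h
    · rw [max_eq_right h, ENNReal.ofReal_of_nonpos h, ENNReal.ofReal_zero]
    · rw [max_eq_left h]
  rw [← ENNReal.ofReal_toReal hT] at h ⊢
  have hx : 0 ≤ T.toReal := ENNReal.toReal_nonneg
  rw [e (-A), e (-B), e A, e B, ← ENNReal.ofReal_mul (by positivity),
    ← ENNReal.ofReal_mul (by positivity), ← ENNReal.ofReal_add hx (by positivity),
    ← ENNReal.ofReal_add (by positivity) (by positivity),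
    ← ENNReal.ofReal_add (by positivity) (by positivity),
    ENNReal.ofReal_le_ofReal_iff (by positivity)] at h
  apply ENNReal.ofReal_le_ofReal
  have h1 : max A 0 - max (-A) 0 = A := by
    rcases le_total A 0 with h | h
    · rw [max_eq_right h, max_eq_left (by linarith)]; ring
    · rw [max_eq_left h, max_eq_right (by linarith)]; ring
  have h2 : max B 0 - max (-B) 0 = B := by
    rcases le_total B 0 with h | h
    · rw [max_eq_right h, max_eq_left (by linarith)]; ring
    · rw [max_eq_left h, max_eq_right (by linarith)]; ring
  have h3 : T.toReal ≤ (max A 0 - max (-A) 0) * μ + (max B 0 - max (-B) 0) := by linarith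
  rwa [h1, h2] at h3

section
variable (η : (ℝ × ℝ) → ∀ N : ℕ, ℝ → (Fin N → ℝ) → (Fin N → ℝ))

/-- The larger of the two risks at zero. -/
def rr (l : ℕ) (τ : ℝ) : ℝ :=
  max (tvRiskZero η (1, 1) l τ).toReal (tvRiskZero η (1, -1) l τ).toReal

/-- Inner maximum of the limiting value. -/
def tvInner (ε : ℝ) (L : ℕ) (τ : ℝ) : ℝ≥0∞ :=
    ⨆ (πp : ℕ → ℝ≥0∞) (πm : ℕ → ℝ≥0∞)
      (_ : (∀ ℓ : ℕ, (ℓ = 0 ∨ L < ℓ) → πp ℓ = 0 ∧ πm ℓ = 0) ∧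
        (∑' ℓ : ℕ, (πp ℓ + πm ℓ)) = 1 ∧
        (∑' ℓ : ℕ, (ℓ : ℝ≥0∞) * (πp ℓ + πm ℓ)) = ENNReal.ofReal (1 / ε)),
      ENNReal.ofReal ε *
        ∑' ℓ : ℕ, (πp ℓ * tvRiskZero η (1, 1) ℓ τ +
          πm ℓ * tvRiskZero η (1, -1) ℓ τ)

lemma tvLimitVal_eq (ε : ℝ) (L : ℕ) :
    tvLimitVal η ε L = ⨅ (τ : ℝ) (_ : 0 ≤ τ), tvInner η ε L τ := rfl

lemma rr_nonneg (l : ℕ) (τ : ℝ) : 0 ≤ rr η l τ := le_max_of_le_left ENNReal.toReal_nonneg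

section
lemma risk_ne_top (hmin : ∀ (s : ℝ × ℝ) (N : ℕ) (τ : ℝ), 0 ≤ τ → ∀ y x : Fin N → ℝ,
      tvObj s N τ y (η s N τ y) ≤ tvObj s N τ y x)
    (s : ℝ × ℝ) (hs1 : |s.1| ≤ 1) (hs2 : |s.2| ≤ 1) (l : ℕ) (τ : ℝ) (hτ : 0 ≤ τ) :
    tvRiskZero η s l τ ≠ ⊤ :=
  ne_top_of_le_ne_top ENNReal.ofReal_ne_top (tvRiskZero_le η hmin s hs1 hs2 l τ hτ)

lemma risk_pp_le (hmin : ∀ (s : ℝ × ℝ) (N : ℕ) (τ : ℝ), 0 ≤ τ → ∀ y x : Fin N → ℝ,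
      tvObj s N τ y (η s N τ y) ≤ tvObj s N τ y x)
    (l : ℕ) (τ : ℝ) (hτ : 0 ≤ τ) :
    tvRiskZero η (1, 1) l τ ≤ ENNReal.ofReal (rr η l τ) := by
  rw [← ENNReal.ofReal_toReal (risk_ne_top η hmin (1, 1) (by simp) (by simp) l τ hτ)]
  exact ENNReal.ofReal_le_ofReal (le_max_left _ _)

lemma risk_pm_le (hmin : ∀ (s : ℝ × ℝ) (N : ℕ) (τ : ℝ), 0 ≤ τ → ∀ y x : Fin N → ℝ,
      tvObj s N τ y (η s N τ y) ≤ tvObj s N τ y x)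
    (l : ℕ) (τ : ℝ) (hτ : 0 ≤ τ) :
    tvRiskZero η (1, -1) l τ ≤ ENNReal.ofReal (rr η l τ) := by
  rw [← ENNReal.ofReal_toReal (risk_ne_top η hmin (1, -1) (by simp) (by simp) l τ hτ)]
  exact ENNReal.ofReal_le_ofReal (le_max_right _ _)

lemma rr_attained (hmin : ∀ (s : ℝ × ℝ) (N : ℕ) (τ : ℝ), 0 ≤ τ → ∀ y x : Fin N → ℝ,
      tvObj s N τ y (η s N τ y) ≤ tvObj s N τ y x)
    (l : ℕ) (τ : ℝ) (hτ : 0 ≤ τ) :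
    tvRiskZero η (1, 1) l τ = ENNReal.ofReal (rr η l τ) ∨
    tvRiskZero η (1, -1) l τ = ENNReal.ofReal (rr η l τ) := by
  unfold rr
  rcases max_choice (tvRiskZero η (1, 1) l τ).toReal (tvRiskZero η (1, -1) l τ).toReal with h | h
  · left; rw [h, ENNReal.ofReal_toReal (risk_ne_top η hmin (1, 1) (by simp) (by simp) l τ hτ)]
  · right; rw [h, ENNReal.ofReal_toReal (risk_ne_top η hmin (1, -1) (by simp) (by simp) l τ hτ)]

lemma rr_le (hmin : ∀ (s : ℝ × ℝ) (N : ℕ) (τ : ℝ), 0 ≤ τ → ∀ y x : Fin N → ℝ,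
      tvObj s N τ y (η s N τ y) ≤ tvObj s N τ y x)
    (l : ℕ) (τ : ℝ) (hτ : 0 ≤ τ) : rr η l τ ≤ l * (1 + 4 * τ ^ 2) := by
  unfold rr
  refine max_le ?_ ?_
  · exact ENNReal.toReal_le_of_le_ofReal (by positivity)
      (tvRiskZero_le η hmin (1, 1) (by simp) (by simp) l τ hτ)
  · exact ENNReal.toReal_le_of_le_ofReal (by positivity)
      (tvRiskZero_le η hmin (1, -1) (by simp) (by simp) l τ hτ)

lemma le_rr_one (hmin : ∀ (s : ℝ × ℝ) (N : ℕ) (τ : ℝ), 0 ≤ τ → ∀ y x : Fin N → ℝ,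
      tvObj s N τ y (η s N τ y) ≤ tvObj s N τ y x)
    (τ : ℝ) (hτ : 0 ≤ τ) : 1 + 4 * τ ^ 2 ≤ rr η 1 τ := by
  unfold rr
  refine le_max_of_le_left ?_
  rw [tvRiskZero_one η hmin τ hτ, ENNReal.toReal_ofReal (by positivity)]

lemma tvInner_le (hmin : ∀ (s : ℝ × ℝ) (N : ℕ) (τ : ℝ), 0 ≤ τ → ∀ y x : Fin N → ℝ,
      tvObj s N τ y (η s N τ y) ≤ tvObj s N τ y x)
    (ε : ℝ) (hε : 0 < ε) (L : ℕ) (τ : ℝ) (hτ : 0 ≤ τ) (A B : ℝ)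
    (hAB : ∀ l : ℕ, 1 ≤ l → l ≤ L → rr η l τ ≤ A * l + B) :
    tvInner η ε L τ ≤ ENNReal.ofReal (ε * (A * (1 / ε) + B)) := by
  unfold tvInner
  refine iSup_le fun πp => iSup_le fun πm => iSup_le fun ⟨hsupp, hs1, hsm⟩ => ?_
  rw [ENNReal.ofReal_mul hε.le]
  gcongr
  apply le_of_split (by positivity)
  rw [← hsm]
  calc _ ≤ ∑' l : ℕ, ((πp l + πm l) * ENNReal.ofReal (rr η l τ)) +
        ENNReal.ofReal (-A) * (∑' l : ℕ, (l : ℝ≥0∞) * (πp l + πm l)) +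
        ENNReal.ofReal (-B) * ∑' l : ℕ, (πp l + πm l) := by
        rw [hs1, mul_one]
        gcongr with l
        rw [add_mul]
        gcongr
        · exact risk_pp_le η hmin l τ hτ
        · exact risk_pm_le η hmin l τ hτ
    _ = ∑' l : ℕ, (πp l + πm l) * (ENNReal.ofReal (rr η l τ) + ENNReal.ofReal (-A) * l +
          ENNReal.ofReal (-B)) := by
        rw [← ENNReal.tsum_mul_left, ← ENNReal.tsum_mul_left, ← ENNReal.tsum_add,
          ← ENNReal.tsum_add]
        refine tsum_congr fun l => ?_
        ring
    _ ≤ ∑' l : ℕ, (πp l + πm l) * (ENNReal.ofReal A * l + ENNReal.ofReal B) := by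
        refine ENNReal.tsum_le_tsum fun l => ?_
        by_cases hl : l = 0 ∨ L < l
        · obtain ⟨h1, h2⟩ := hsupp l hl
          rw [h1, h2]; simp
        · push Not at hl
          refine mul_le_mul' le_rfl ?_
          exact ofReal_split (rr_nonneg η l τ) l (hAB l (by omega) (by omega))
    _ = ENNReal.ofReal A * (∑' l : ℕ, (l : ℝ≥0∞) * (πp l + πm l)) +
        ENNReal.ofReal B * ∑' l : ℕ, (πp l + πm l) := by
        rw [← ENNReal.tsum_mul_left, ← ENNReal.tsum_mul_left, ← ENNReal.tsum_add]
        refine tsum_congr fun l => ?_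
        ring
    _ = _ := by rw [hs1, mul_one]

lemma rr_convex (hmin : ∀ (s : ℝ × ℝ) (N : ℕ) (τ : ℝ), 0 ≤ τ → ∀ y x : Fin N → ℝ,
      tvObj s N τ y (η s N τ y) ≤ tvObj s N τ y x)
    (l : ℕ) (τ : ℝ) (hτ : 0 ≤ τ) : ∃ c d : ℝ≥0∞, c + d = 1 ∧
    c * tvRiskZero η (1, 1) l τ + d * tvRiskZero η (1, -1) l τ = ENNReal.ofReal (rr η l τ) := by
  rcases rr_attained η hmin l τ hτ with h | h
  · exact ⟨1, 0, by simp, by simp [h]⟩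
  · exact ⟨0, 1, by simp, by simp [h]⟩

lemma le_tvInner (hmin : ∀ (s : ℝ × ℝ) (N : ℕ) (τ : ℝ), 0 ≤ τ → ∀ y x : Fin N → ℝ,
      tvObj s N τ y (η s N τ y) ≤ tvObj s N τ y x)
    (ε : ℝ) (hε : 0 < ε) (L : ℕ) (τ : ℝ) (hτ : 0 ≤ τ) (l1 l2 : ℕ)
    (h11 : 1 ≤ l1) (h1L : l1 ≤ L) (h21 : 1 ≤ l2) (h2L : l2 ≤ L) (p1 p2 : ℝ) (hp1 : 0 ≤ p1)
    (hp2 : 0 ≤ p2) (hp : p1 + p2 = 1) (hm : p1 * l1 + p2 * l2 = 1 / ε) :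
    ENNReal.ofReal (ε * (p1 * rr η l1 τ + p2 * rr η l2 τ)) ≤ tvInner η ε L τ := by
  obtain ⟨c1, d1, hcd1, hr1⟩ := rr_convex η hmin l1 τ hτ
  obtain ⟨c2, d2, hcd2, hr2⟩ := rr_convex η hmin l2 τ hτ
  have key : ∀ f g : ℕ → ℝ≥0∞, ∑' l : ℕ, ((if l = l1 then f l else 0) + (if l = l2 then g l else 0))
      = f l1 + g l2 := by
    intro f g
    rw [ENNReal.tsum_add, tsum_eq_single l1 (fun l hl => if_neg hl),
      tsum_eq_single l2 (fun l hl => if_neg hl), if_pos rfl, if_pos rfl]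
  unfold tvInner
  refine le_iSup_of_le (fun l => (if l = l1 then c1 * ENNReal.ofReal p1 else 0) +
    (if l = l2 then c2 * ENNReal.ofReal p2 else 0)) ?_
  refine le_iSup_of_le (fun l => (if l = l1 then d1 * ENNReal.ofReal p1 else 0) +
    (if l = l2 then d2 * ENNReal.ofReal p2 else 0)) ?_
  refine le_iSup_of_le ⟨?_, ?_, ?_⟩ ?_
  · intro l hl
    have e1 : l ≠ l1 := by omega
    have e2 : l ≠ l2 := by omega
    simp [e1, e2]
  · rw [← tsum_congr (f := fun l : ℕ => (if l = l1 then ENNReal.ofReal p1 else 0) +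
      (if l = l2 then ENNReal.ofReal p2 else 0)), key (fun _ => ENNReal.ofReal p1)
        (fun _ => ENNReal.ofReal p2)]
    · rw [← ENNReal.ofReal_add hp1 hp2, hp, ENNReal.ofReal_one]
    · intro l
      rw [add_add_add_comm]
      congr 1
      · split_ifs
        · rw [← add_mul, hcd1, one_mul]
        · simp
      · split_ifs
        · rw [← add_mul, hcd2, one_mul]
        · simp
  · rw [← tsum_congr (f := fun l : ℕ => (if l = l1 then l * ENNReal.ofReal p1 else 0) +
      (if l = l2 then l * ENNReal.ofReal p2 else 0)), key (fun l => l * ENNReal.ofReal p1)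
        (fun l => l * ENNReal.ofReal p2)]
    · rw [← ENNReal.ofReal_natCast, ← ENNReal.ofReal_natCast, ← ENNReal.ofReal_mul (by positivity),
        ← ENNReal.ofReal_mul (by positivity), ← ENNReal.ofReal_add (by positivity) (by positivity),
        ← hm]
      congr 1; ring
    · intro l
      rw [add_add_add_comm, mul_add]
      congr 1
      · split_ifs
        · rw [← add_mul, hcd1, one_mul]
        · simp
      · split_ifs
        · rw [← add_mul, hcd2, one_mul]
        · simp
  · rw [ENNReal.ofReal_mul hε.le]
    gcongr
    rw [← tsum_congr (f := fun l : ℕ =>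
      (if l = l1 then ENNReal.ofReal p1 * (c1 * tvRiskZero η (1, 1) l τ +
        d1 * tvRiskZero η (1, -1) l τ) else 0) +
      (if l = l2 then ENNReal.ofReal p2 * (c2 * tvRiskZero η (1, 1) l τ +
        d2 * tvRiskZero η (1, -1) l τ) else 0)),
      key (fun l => ENNReal.ofReal p1 * (c1 * tvRiskZero η (1, 1) l τ +
        d1 * tvRiskZero η (1, -1) l τ)) (fun l => ENNReal.ofReal p2 * (c2 * tvRiskZero η (1, 1) l τ +
        d2 * tvRiskZero η (1, -1) l τ))]
    · have := rr_nonneg η l1 τ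
      have := rr_nonneg η l2 τ
      rw [hr1, hr2, ← ENNReal.ofReal_mul hp1, ← ENNReal.ofReal_mul hp2,
        ← ENNReal.ofReal_add (by positivity) (by positivity)]
    · intro l
      rw [add_mul, add_mul, add_add_add_comm]
      congr 1
      · split_ifs
        · ring
        · simp
      · split_ifs
        · ring
        · simp

/-- Optimal dual line for the limiting value. -/
lemma exists_dual (hmin : ∀ (s : ℝ × ℝ) (N : ℕ) (τ : ℝ), 0 ≤ τ → ∀ y x : Fin N → ℝ,
      tvObj s N τ y (η s N τ y) ≤ tvObj s N τ y x)
    (ε : ℝ) (hε0 : 0 < ε) (hε1 : ε < 1) (L : ℕ) (hL : 1 / ε ≤ L)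
    (τ : ℝ) (hτ : 0 ≤ τ) (h : ℝ)
    (h2 : ∀ (l1 l2 : ℕ) (p1 p2 : ℝ), 1 ≤ l1 → l1 ≤ L → 1 ≤ l2 → l2 ≤ L → 0 ≤ p1 → 0 ≤ p2 →
      ((l1 : ℝ) < 1 / ε ∧ 1 / ε < l2 ∧ p1 = (l2 - 1 / ε) / (l2 - l1) ∨ (l1 : ℝ) = 1 / ε ∧ p1 = 1) →
      p1 + p2 = 1 → p1 * l1 + p2 * l2 = 1 / ε → p1 * rr η l1 τ + p2 * rr η l2 τ ≤ h) :
    ∃ A B : ℝ, A * (1 / ε) + B = h ∧ ∀ l : ℕ, 1 ≤ l → l ≤ L → rr η l τ ≤ A * l + B := by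
  have hμ1 : 1 < 1 / ε := by rw [lt_div_iff₀ hε0]; linarith
  refine lp_dual (fun l => rr η l τ) L (1 / ε) h hμ1 hL ?_ ?_
  · intro l1 l2 hl1 hl2 hlt hgt
    have hd : (0 : ℝ) < l2 - l1 := by linarith
    have h12 : l1 < l2 := by
      have : (l1 : ℝ) < l2 := by linarith
      exact_mod_cast this
    have := h2 l1 l2 ((l2 - 1 / ε) / (l2 - l1)) ((1 / ε - l1) / (l2 - l1)) hl1 (by omega) (by omega)
      hl2 (div_nonneg (by linarith) hd.le) (div_nonneg (by linarith) hd.le)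
      (Or.inl ⟨hlt, hgt, rfl⟩)
      (by rw [← add_div, div_eq_one_iff_eq hd.ne']; ring)
      (by rw [div_mul_eq_mul_div, div_mul_eq_mul_div, ← add_div, div_eq_iff hd.ne']; ring)
    rw [div_mul_eq_mul_div, div_mul_eq_mul_div, ← add_div, div_le_iff₀ hd] at this
    linarith
  · intro l hl hlL heq
    have := h2 l l 1 0 hl hlL hl hlL zero_le_one le_rfl (Or.inr ⟨heq, rfl⟩) (by norm_num)
      (by rw [← heq]; ring)
    linarith

end
end


/-! ### Upper bound -/

section
variable (η : (ℝ × ℝ) → ∀ N : ℕ, ℝ → (Fin N → ℝ) → (Fin N → ℝ))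

lemma risk_sign_le (hmeas : ∀ s N τ, Measurable (η s N τ))
    (hmin : ∀ (s : ℝ × ℝ) (N : ℕ) (τ : ℝ), 0 ≤ τ → ∀ y x : Fin N → ℝ,
      tvObj s N τ y (η s N τ y) ≤ tvObj s N τ y x)
    (a c : ℝ) (ha : |a| = 1) (hc : |c| = 1) (l : ℕ) (τ : ℝ) (hτ : 0 ≤ τ) :
    tvRiskZero η (a, -c) l τ ≤ ENNReal.ofReal (rr η l τ) := by
  rcases eq_or_eq_neg_of_abs_eq ha with rfl | rfl <;>
  rcases eq_or_eq_neg_of_abs_eq hc with rfl | rfl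
  · exact risk_pm_le η hmin l τ hτ
  · rw [neg_neg]; exact risk_pp_le η hmin l τ hτ
  · rw [show ((-1 : ℝ), (-1 : ℝ)) = -((1 : ℝ), (1 : ℝ)) from rfl, tvRiskZero_neg η hmeas hmin _ _ _ hτ]
    exact risk_pp_le η hmin l τ hτ
  · rw [show ((-1 : ℝ), (- -1 : ℝ)) = -((1 : ℝ), (-1 : ℝ)) from rfl, tvRiskZero_neg η hmeas hmin _ _ _ hτ]
    exact risk_pm_le η hmin l τ hτ

lemma riskAt_upper (hmeas : ∀ s N τ, Measurable (η s N τ))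
    (hmin : ∀ (s : ℝ × ℝ) (N : ℕ) (τ : ℝ), 0 ≤ τ → ∀ y x : Fin N → ℝ,
      tvObj s N τ y (η s N τ y) ≤ tvObj s N τ y x)
    (L N : ℕ) (hN : 1 ≤ N) (τ : ℝ) (hτ : 0 ≤ τ) (A B : ℝ) (hB : 0 ≤ B)
    (hAB : ∀ l : ℕ, 1 ≤ l → l ≤ L → rr η l τ ≤ A * l + B)
    (x : Fin N → ℝ) (hx : segOK L N x) :
    0 ≤ A * N + B * changeCount N x + (B + 2 * (L * (1 + 4 * τ ^ 2) + |A| * L)) ∧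
    riskAt η N τ x ≤ ENNReal.ofReal (A * N + B * changeCount N x +
      (B + 2 * (L * (1 + 4 * τ ^ 2) + |A| * L))) := by
  classical
  obtain ⟨m, b, hb, hbd, hin⟩ := exists_blocks (fun i => dif N x i ≠ 0) N hN
  simp only [not_not] at hin
  have hcc := changeCount_blocks hb x hin hbd
  set σ : ℕ → ℝ := fun j => if 1 ≤ j ∧ j ≤ m then (if 0 ≤ dif N x (b j - 1) then 1 else -1) else 0
    with hσdef
  have hσ1 : ∀ j < m, σ (j + 1) = if 0 ≤ dif N x (b (j + 1) - 1) then 1 else -1 := by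
    intro j hj
    simp only [hσdef]
    rw [if_pos ⟨by omega, by omega⟩]
  have hσ0 : σ 0 = 0 := by simp [hσdef]
  have hσm : σ (m + 1) = 0 := by simp [hσdef]
  have hσabs : ∀ j < m, |σ (j + 1)| = 1 := by
    intro j hj
    rw [hσ1 j hj]
    split_ifs <;> simp
  have hσle : ∀ j, |σ j| ≤ 1 := by
    intro j
    simp only [hσdef]
    split_ifs <;> simp
  have hr := riskAt_le η hmeas hmin hb σ hσ0 hσm τ hτ x hin hσabs (by
    intro j hj
    rw [hσ1 j hj]
    split_ifs with h
    · rw [abs_of_nonneg h, one_mul]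
    · rw [abs_of_neg (not_le.1 h)]; ring)
  set C1 : ℝ := L * (1 + 4 * τ ^ 2) + |A| * L with hC1
  have hC1n : 0 ≤ C1 := by positivity
  have hlen : ∀ j ≤ m, b (j + 1) - b j ≤ L := fun j hj => segOK_len hb x hin hx j hj
  have hpos : ∀ j ≤ m, 1 ≤ b (j + 1) - b j := fun j hj => by
    have := hb.lt j hj
    omega
  have hAl : ∀ l : ℕ, 1 ≤ l → l ≤ L → 0 ≤ A * l + B := fun l h1 h2 =>
    (rr_nonneg η l τ).trans (hAB l h1 h2)
  set g : ℕ → ℝ := fun j => A * ((b (j + 1) - b j : ℕ) : ℝ) + B + ((if j = 0 then C1 else 0) +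
    (if j = m then C1 else 0)) with hg
  have hgn : ∀ j ∈ Finset.range (m + 1), 0 ≤ g j := by
    intro j hj
    have hj' : j ≤ m := by simpa [Nat.lt_succ_iff] using hj
    have := hAl _ (hpos j hj') (hlen j hj')
    simp only [hg]
    have h1 : (0 : ℝ) ≤ if j = 0 then C1 else 0 := by split_ifs <;> simp [hC1n]
    have h2 : (0 : ℝ) ≤ if j = m then C1 else 0 := by split_ifs <;> simp [hC1n]
    linarith
  have hsum : ∑ j ∈ Finset.range (m + 1), g j = A * N + B * m + (B + 2 * C1) := by
    have h1 := sum_blocks (fun _ => (1 : ℝ)) b hb.zero (m + 1)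
      (fun j hj => (hb.lt j (by omega)).le)
    simp only [Finset.sum_const, Finset.card_range, nsmul_eq_mul, mul_one, hb.last] at h1
    simp only [hg, Finset.sum_add_distrib, ← Finset.mul_sum, ← h1]
    simp
    ring
  refine ⟨by rw [hcc, ← hsum]; exact Finset.sum_nonneg hgn, hr.trans ?_⟩
  calc _ ≤ ∑ j ∈ Finset.range (m + 1), ENNReal.ofReal (g j) := by
        refine Finset.sum_le_sum fun j hj => ?_
        have hj' : j ≤ m := by simpa [Nat.lt_succ_iff] using hj
        have hl1 := hpos j hj'
        have hlL := hlen j hj'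
        by_cases hmid : j = 0 ∨ j = m
        · refine (tvRiskZero_le η hmin _ (hσle j) (by simpa using hσle (j + 1)) _ τ hτ).trans ?_
          apply ENNReal.ofReal_le_ofReal
          have hlR : ((b (j + 1) - b j : ℕ) : ℝ) ≤ L := by exact_mod_cast hlL
          have h0 : (0 : ℝ) ≤ ((b (j + 1) - b j : ℕ) : ℝ) := Nat.cast_nonneg _
          have e : C1 ≤ (if j = 0 then C1 else 0) + (if j = m then C1 else 0) := by
            rcases hmid with h | h
            · rw [if_pos h]
              have : (0 : ℝ) ≤ if j = m then C1 else 0 := by split_ifs <;> simp [hC1n]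
              linarith
            · rw [if_pos h]
              have : (0 : ℝ) ≤ if j = 0 then C1 else 0 := by split_ifs <;> simp [hC1n]
              linarith
          have e2 : ((b (j + 1) - b j : ℕ) : ℝ) * (1 + 4 * τ ^ 2) ≤ L * (1 + 4 * τ ^ 2) := by
            gcongr
          have e3 : -(A * ((b (j + 1) - b j : ℕ) : ℝ)) ≤ |A| * L := by
            calc _ ≤ |A * ((b (j + 1) - b j : ℕ) : ℝ)| := neg_le_abs _
              _ = |A| * ((b (j + 1) - b j : ℕ) : ℝ) := by rw [abs_mul, abs_of_nonneg h0]
              _ ≤ _ := by gcongr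
          simp only [hg]
          linarith
        · push Not at hmid
          have ha : |σ j| = 1 := by
            have := hσabs (j - 1) (by omega)
            rwa [show j - 1 + 1 = j by omega] at this
          have hc : |σ (j + 1)| = 1 := hσabs j (by omega)
          refine (risk_sign_le η hmeas hmin _ _ ha hc _ τ hτ).trans ?_
          apply ENNReal.ofReal_le_ofReal
          have := hAB _ hl1 hlL
          simp only [hg, if_neg hmid.1, if_neg hmid.2]
          linarith
    _ = ENNReal.ofReal (∑ j ∈ Finset.range (m + 1), g j) :=
        (ENNReal.ofReal_sum_of_nonneg hgn).symm
    _ = _ := by rw [hsum, hcc]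

lemma segOK_count (L N : ℕ) (hN : 1 ≤ N) (x : Fin N → ℝ) (hx : segOK L N x) :
    N ≤ L * (changeCount N x + 1) := by
  classical
  obtain ⟨m, b, hb, hbd, hin⟩ := exists_blocks (fun i => dif N x i ≠ 0) N hN
  simp only [not_not] at hin
  rw [changeCount_blocks hb x hin hbd]
  have : ∀ j ≤ m + 1, b j ≤ L * j := by
    intro j
    induction j with
    | zero => intro _; simp [hb.zero]
    | succ j ih =>
      intro hj
      have h1 := ih (by omega)
      have h2 := segOK_len hb x hin hx j (by omega)
      rw [mul_add]
      omega
  have h := this (m + 1) le_rfl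
  rwa [hb.last] at h

lemma lintegral_prod_eq (hmeas : ∀ s N τ, Measurable (η s N τ)) (N : ℕ) (τ : ℝ)
    (ν : Measure (Fin N → ℝ)) [SFinite ν] :
    ∫⁻ p, ENNReal.ofReal (∑ i, (p.1 i - η (0, 0) N τ (p.1 + p.2) i) ^ 2)
        ∂(ν.prod (_root_.stdGaussian N)) = ∫⁻ x, riskAt η N τ x ∂ν := by
  rw [lintegral_prod]
  · rfl
  · apply Measurable.aemeasurable
    apply ENNReal.measurable_ofReal.comp
    refine Finset.measurable_sum _ fun i _ => ?_
    have h1 : Measurable fun p : (Fin N → ℝ) × (Fin N → ℝ) => η (0, 0) N τ (p.1 + p.2) :=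
      (hmeas _ _ _).comp (measurable_fst.add measurable_snd)
    exact (((measurable_pi_apply i).comp measurable_fst).sub
      ((measurable_pi_apply i).comp h1)).pow_const 2

lemma class_risk_le (hmeas : ∀ s N τ, Measurable (η s N τ))
    (hmin : ∀ (s : ℝ × ℝ) (N : ℕ) (τ : ℝ), 0 ≤ τ → ∀ y x : Fin N → ℝ,
      tvObj s N τ y (η s N τ y) ≤ tvObj s N τ y x)
    (ε : ℝ) (hε : 0 < ε) (L N : ℕ) (hN : 1 ≤ N) (τ : ℝ) (hτ : 0 ≤ τ) (A B : ℝ) (hB : 0 ≤ B)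
    (hAB : ∀ l : ℕ, 1 ≤ l → l ≤ L → rr η l τ ≤ A * l + B)
    (ν : Measure (Fin N → ℝ)) (hν : ν ∈ tvClass N ε L) :
    ∫⁻ p, ENNReal.ofReal (∑ i, (p.1 i - η (0, 0) N τ (p.1 + p.2) i) ^ 2)
        ∂(ν.prod (_root_.stdGaussian N)) ≤
      ENNReal.ofReal (N * (A + B * ε) + (B + 2 * (L * (1 + 4 * τ ^ 2) + |A| * L))) := by
  obtain ⟨hprob, hseg, hcc⟩ := hν
  set C := B + 2 * (L * (1 + 4 * τ ^ 2) + |A| * L) with hC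
  have hCn : 0 ≤ C := by positivity
  rw [lintegral_prod_eq η hmeas N τ ν]
  have hpt : ∀ᵐ x ∂ν, riskAt η N τ x + ENNReal.ofReal (-A) * N ≤
      (ENNReal.ofReal A * N + ENNReal.ofReal C) + ENNReal.ofReal B * changeCount N x := by
    have : ∀ᵐ x ∂ν, segOK L N x := hseg
    filter_upwards [this] with x hx
    obtain ⟨h0, h1⟩ := riskAt_upper η hmeas hmin L N hN τ hτ A B hB hAB x hx
    rw [← hC] at h1 h0
    have hcn : (0 : ℝ) ≤ changeCount N x := Nat.cast_nonneg _
    have hNn : (0 : ℝ) ≤ N := Nat.cast_nonneg _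
    have hfin : riskAt η N τ x ≠ ⊤ := ne_top_of_le_ne_top ENNReal.ofReal_ne_top h1
    have hT := ENNReal.toReal_le_of_le_ofReal h0 h1
    have h2 := ofReal_split (A := A) (B := B * changeCount N x + C)
      ENNReal.toReal_nonneg N (hT.trans (le_of_eq (by ring)))
    rw [ENNReal.ofReal_toReal hfin] at h2
    refine le_self_add.trans (h2.trans (le_of_eq ?_))
    rw [ENNReal.ofReal_add (by positivity) hCn, ENNReal.ofReal_mul hB, ENNReal.ofReal_natCast]
    ring
  have hint := lintegral_mono_ae hpt
  rw [lintegral_add_right _ measurable_const, lintegral_add_left measurable_const,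
    lintegral_const, lintegral_const, measure_univ, mul_one, mul_one,
    lintegral_const_mul' _ _ ENNReal.ofReal_ne_top] at hint
  have hNn : (0 : ℝ) ≤ N := Nat.cast_nonneg _
  have hfinal : (∫⁻ x, riskAt η N τ x ∂ν) + ENNReal.ofReal (-A) * ENNReal.ofReal N +
      ENNReal.ofReal (-(N * (B * ε) + C)) ≤
      ENNReal.ofReal A * ENNReal.ofReal N + ENNReal.ofReal (N * (B * ε) + C) := by
    have hD : 0 ≤ N * (B * ε) := by positivity
    rw [ENNReal.ofReal_of_nonpos (show -(N * (B * ε) + C) ≤ 0 by linarith), add_zero,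
      ENNReal.ofReal_natCast]
    refine hint.trans ?_
    calc _ ≤ ENNReal.ofReal A * N + ENNReal.ofReal C +
          ENNReal.ofReal B * ((N : ℝ≥0∞) * ENNReal.ofReal ε) := by gcongr
      _ = _ := by
        rw [ENNReal.ofReal_add hD hCn, ENNReal.ofReal_mul hNn, ENNReal.ofReal_mul hB,
          ENNReal.ofReal_natCast]
        ring
  refine (le_of_split hNn hfinal).trans (le_of_eq ?_)
  congr 1; ring

lemma tvInner_le_top (hmin : ∀ (s : ℝ × ℝ) (N : ℕ) (τ : ℝ), 0 ≤ τ → ∀ y x : Fin N → ℝ,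
      tvObj s N τ y (η s N τ y) ≤ tvObj s N τ y x)
    (ε : ℝ) (hε : 0 < ε) (L : ℕ) (τ : ℝ) (hτ : 0 ≤ τ) :
    tvInner η ε L τ ≤ ENNReal.ofReal (1 + 4 * τ ^ 2) := by
  refine (tvInner_le η hmin ε hε L τ hτ (1 + 4 * τ ^ 2) 0 fun l _ _ => ?_).trans (le_of_eq ?_)
  · rw [add_zero, mul_comm]; exact rr_le η hmin l τ hτ
  · congr 1; field_simp; ring

lemma tvMSE_upper (hmeas : ∀ s N τ, Measurable (η s N τ))
    (hmin : ∀ (s : ℝ × ℝ) (N : ℕ) (τ : ℝ), 0 ≤ τ → ∀ y x : Fin N → ℝ,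
      tvObj s N τ y (η s N τ y) ≤ tvObj s N τ y x)
    (ε : ℝ) (hε0 : 0 < ε) (hε1 : ε < 1) (L : ℕ) (hL : 1 / ε ≤ L) (τ : ℝ) (hτ : 0 ≤ τ) :
    ∃ C : ℝ, ∀ N : ℕ, 1 ≤ N →
      tvMSE η N ε L ≤ ENNReal.ofReal ((tvInner η ε L τ).toReal + C / N) := by
  set v := (tvInner η ε L τ).toReal with hv
  have hK := tvInner_le_top η hmin ε hε0 L τ hτ
  have hfin : tvInner η ε L τ ≠ ⊤ := ne_top_of_le_ne_top ENNReal.ofReal_ne_top hK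
  have hvK : v ≤ 1 + 4 * τ ^ 2 := ENNReal.toReal_le_of_le_ofReal (by positivity) hK
  have hμ1 : 1 < 1 / ε := by rw [lt_div_iff₀ hε0]; linarith
  obtain ⟨A, B, hABh, hAB⟩ := exists_dual η hmin ε hε0 hε1 L hL τ hτ (v / ε) (by
    intro l1 l2 p1 p2 h11 h1L h21 h2L hp1 hp2 _ hp hm
    have h := le_tvInner η hmin ε hε0 L τ hτ l1 l2 h11 h1L h21 h2L p1 p2 hp1 hp2 hp hm
    rw [ENNReal.ofReal_le_iff_le_toReal hfin] at h
    rw [le_div_iff₀ hε0]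
    linarith)
  have hL1 : 1 ≤ L := by
    have : (1 : ℝ) < L := lt_of_lt_of_le hμ1 hL
    exact_mod_cast this.le
  have hB : 0 ≤ B := by
    have h1 := hAB 1 le_rfl hL1
    have h2 := le_rr_one η hmin τ hτ
    rw [Nat.cast_one, mul_one] at h1
    have h3 : A * (1 / ε) + B ≤ (1 + 4 * τ ^ 2) * (1 / ε) := by
      rw [hABh, div_eq_mul_one_div]; gcongr
    have h4 : A ≤ 1 + 4 * τ ^ 2 := by
      by_contra hcon
      push Not at hcon
      nlinarith
    linarith
  have hAv : A + B * ε = v := by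
    field_simp at hABh
    linarith
  refine ⟨B + 2 * (L * (1 + 4 * τ ^ 2) + |A| * L), fun N hN => ?_⟩
  have hNpos : (0 : ℝ) < N := by exact_mod_cast hN
  set C := B + 2 * (L * (1 + 4 * τ ^ 2) + |A| * L) with hC
  unfold tvMSE
  calc _ ≤ (N : ℝ≥0∞)⁻¹ * ENNReal.ofReal (N * v + C) := by
        refine mul_le_mul' le_rfl (iInf₂_le_of_le τ hτ (iSup₂_le fun ν hν => ?_))
        rw [← hAv]
        exact class_risk_le η hmeas hmin ε hε0 L N hN τ hτ A B hB hAB ν hν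
    _ = ENNReal.ofReal ((N : ℝ)⁻¹ * (N * v + C)) := by
        rw [ENNReal.ofReal_mul (by positivity), ENNReal.ofReal_inv_of_pos hNpos,
          ENNReal.ofReal_natCast]
    _ = _ := by
        congr 1
        field_simp

/-- The infeasible case. -/
lemma tvInner_infeasible (ε : ℝ) (hε0 : 0 < ε) (L : ℕ) (hL : (L : ℝ) < 1 / ε) (τ : ℝ) :
    tvInner η ε L τ = 0 := by
  unfold tvInner
  simp only [iSup_eq_zero]
  rintro πp πm ⟨hsupp, hs1, hsm⟩
  exfalso
  have : ENNReal.ofReal (1 / ε) ≤ L := by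
    rw [← hsm]
    calc _ ≤ ∑' l : ℕ, (L : ℝ≥0∞) * (πp l + πm l) := by
          refine ENNReal.tsum_le_tsum fun l => ?_
          by_cases hl : l = 0 ∨ L < l
          · obtain ⟨h1, h2⟩ := hsupp l hl
            rw [h1, h2]; simp
          · push Not at hl
            gcongr
            exact hl.2
      _ = L := by rw [ENNReal.tsum_mul_left, hs1, mul_one]
  rw [← ENNReal.ofReal_natCast, ENNReal.ofReal_le_ofReal_iff (by positivity)] at this
  linarith

lemma tvClass_infeasible (ε : ℝ) (hε0 : 0 < ε) (L N : ℕ) (hN : 1 ≤ N)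
    (hNL : (L : ℝ) * (N * ε + 1) < N) : tvClass N ε L = ∅ := by
  rw [Set.eq_empty_iff_forall_notMem]
  rintro ν ⟨hprob, hseg, hcc⟩
  have hpt : ∀ᵐ x ∂ν, (N : ℝ≥0∞) ≤ L * ((changeCount N x : ℝ≥0∞) + 1) := by
    have : ∀ᵐ x ∂ν, segOK L N x := hseg
    filter_upwards [this] with x hx
    exact_mod_cast segOK_count L N hN x hx
  have hint := lintegral_mono_ae hpt
  rw [lintegral_const, measure_univ, mul_one, lintegral_const_mul' _ _ (ENNReal.natCast_ne_top L),
    lintegral_add_right _ measurable_const, lintegral_const, measure_univ, mul_one] at hint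
  have : (N : ℝ≥0∞) ≤ ENNReal.ofReal (L * (N * ε + 1)) := by
    rw [ENNReal.ofReal_mul (by positivity), ENNReal.ofReal_add (by positivity) (by positivity),
      ENNReal.ofReal_mul (by positivity), ENNReal.ofReal_natCast, ENNReal.ofReal_natCast,
      ENNReal.ofReal_one]
    exact hint.trans (by gcongr)
  rw [← ENNReal.ofReal_natCast, ENNReal.ofReal_le_ofReal_iff (by positivity)] at this
  linarith

lemma tendsto_infeasible (ε : ℝ) (hε0 : 0 < ε) (L : ℕ) (hL : (L : ℝ) < 1 / ε) :
    Tendsto (fun N : ℕ => tvMSE η N ε L) atTop (nhds (tvLimitVal η ε L)) := by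
  have h0 : tvLimitVal η ε L = 0 := by
    rw [tvLimitVal_eq, ← nonpos_iff_eq_zero]
    exact iInf₂_le_of_le 0 le_rfl (tvInner_infeasible η ε hε0 L hL 0).le
  rw [h0]
  have hLε : 0 < 1 - L * ε := by
    rw [lt_div_iff₀ hε0] at hL
    linarith
  refine tendsto_const_nhds.congr' ?_
  filter_upwards [eventually_ge_atTop 1, eventually_gt_atTop ⌈(L : ℝ) / (1 - L * ε)⌉₊] with N hN hN2
  have hNL : (L : ℝ) * (N * ε + 1) < N := by
    have h1 : (L : ℝ) / (1 - L * ε) < N := (Nat.le_ceil _).trans_lt (by exact_mod_cast hN2)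
    rw [div_lt_iff₀ hLε] at h1
    linarith
  unfold tvMSE
  rw [tvClass_infeasible ε hε0 L N hN hNL]
  symm
  rw [mul_eq_zero]
  right
  rw [← nonpos_iff_eq_zero]
  exact iInf₂_le_of_le 0 le_rfl (by simp)
end


/-! ### Lower bound -/

section
variable (η : (ℝ × ℝ) → ∀ N : ℕ, ℝ → (Fin N → ℝ) → (Fin N → ℝ))

/-- Worst-case risk over the class. -/
def supRisk (N : ℕ) (ε : ℝ) (L : ℕ) (τ : ℝ) : ℝ≥0∞ :=
  ⨆ ν ∈ tvClass N ε L,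
      ∫⁻ p, ENNReal.ofReal (∑ i, (p.1 i - η (0, 0) N τ (p.1 + p.2) i) ^ 2)
        ∂(ν.prod (_root_.stdGaussian N))

lemma riskAt_le_supRisk (hmeas : ∀ s N τ, Measurable (η s N τ)) (N : ℕ) (ε : ℝ) (L : ℕ) (τ : ℝ)
    (x : Fin N → ℝ) (hx : segOK L N x) (hcc : (changeCount N x : ℝ) ≤ N * ε) :
    riskAt η N τ x ≤ supRisk η N ε L τ := by
  have hmem : Measure.dirac x ∈ tvClass N ε L := by
    refine ⟨inferInstance, ?_, ?_⟩
    · have : ∀ᵐ y ∂(Measure.dirac x), segOK L N y := by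
        rw [ae_dirac_eq]; exact hx
      exact this
    · rw [lintegral_dirac, ← ENNReal.ofReal_natCast, ← ENNReal.ofReal_natCast,
        ← ENNReal.ofReal_mul (Nat.cast_nonneg _)]
      exact ENNReal.ofReal_le_ofReal hcc
  refine le_iSup₂_of_le (Measure.dirac x) hmem ?_
  rw [lintegral_prod_eq η hmeas, lintegral_dirac]

lemma blocks_le_supRisk (hmeas : ∀ s N τ, Measurable (η s N τ))
    (hmin : ∀ (s : ℝ × ℝ) (N : ℕ) (τ : ℝ), 0 ≤ τ → ∀ y x : Fin N → ℝ,
      tvObj s N τ y (η s N τ y) ≤ tvObj s N τ y x)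
    (N : ℕ) (ε : ℝ) (L : ℕ) (τ : ℝ) (hτ : 0 ≤ τ) (m : ℕ) (b : ℕ → ℕ) (hb : IsBlocks N m b)
    (hlen : ∀ j ≤ m, b (j + 1) - b j ≤ L) (hm : (m : ℝ) ≤ N * ε)
    (σ : ℕ → ℝ) (hσ0 : σ 0 = 0) (hσ1 : σ (m + 1) = 0) (hσ : ∀ j < m, |σ (j + 1)| = 1) :
    ∑ j ∈ Finset.range (m + 1), tvRiskZero η (σ j, -σ (j + 1)) (b (j + 1) - b j) τ ≤
      supRisk η N ε L τ := by
  refine (le_iSup_riskAt η hmeas hmin hb σ hσ0 hσ1 τ hτ hσ).trans (iSup_le fun n => ?_)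
  have hc : (2 * ((n : ℝ) + 1)) ≠ 0 := by positivity
  have hbd : ∀ j < m, dif N ((2 * ((n : ℝ) + 1)) • stair N m b σ) (b (j + 1) - 1) ≠ 0 := by
    intro j hj
    rw [dif_smul, stair_bd hb σ j hj]
    refine mul_ne_zero hc fun h => ?_
    have := hσ j hj
    rw [h] at this
    simp at this
  have hin : ∀ j ≤ m, ∀ k, k + 1 < b (j + 1) - b j →
      dif N ((2 * ((n : ℝ) + 1)) • stair N m b σ) (b j + k) = 0 := by
    intro j hj k hk
    rw [dif_smul, stair_in hb σ j hj k hk, mul_zero]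
  apply riskAt_le_supRisk η hmeas
  · exact segOK_of_len hb _ hbd hlen
  · rw [changeCount_blocks hb _ hin hbd]; exact hm

lemma exists_q (hmin : ∀ (s : ℝ × ℝ) (N : ℕ) (τ : ℝ), 0 ≤ τ → ∀ y x : Fin N → ℝ,
      tvObj s N τ y (η s N τ y) ≤ tvObj s N τ y x) (τ : ℝ) (hτ : 0 ≤ τ) (l : ℕ) :
    ∃ q : ℝ, |q| = 1 ∧ tvRiskZero η (1, -q) l τ = ENNReal.ofReal (rr η l τ) := by
  rcases rr_attained η hmin l τ hτ with h | h
  · exact ⟨-1, by simp, by rw [neg_neg]; exact h⟩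
  · exact ⟨1, by simp, h⟩

lemma len_le_supRisk (hmeas : ∀ s N τ, Measurable (η s N τ))
    (hmin : ∀ (s : ℝ × ℝ) (N : ℕ) (τ : ℝ), 0 ≤ τ → ∀ y x : Fin N → ℝ,
      tvObj s N τ y (η s N τ y) ≤ tvObj s N τ y x)
    (N : ℕ) (ε : ℝ) (L : ℕ) (τ : ℝ) (hτ : 0 ≤ τ) (m : ℕ) (len : ℕ → ℕ)
    (hlen1 : ∀ j ≤ m, 1 ≤ len j) (hlen : ∀ j ≤ m, len j ≤ L)
    (hsum : ∑ j ∈ Finset.range (m + 1), len j = N) (hm : (m : ℝ) ≤ N * ε) :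
    ∑ j ∈ Finset.range (m - 1), ENNReal.ofReal (rr η (len (1 + j)) τ) ≤ supRisk η N ε L τ := by
  choose q hq1 hq2 using exists_q η hmin τ hτ
  set b : ℕ → ℕ := fun j => ∑ i ∈ Finset.range j, len i with hbdef
  have hbs : ∀ j, b (j + 1) - b j = len j := by
    intro j
    simp [hbdef, Finset.sum_range_succ]
  have hb : IsBlocks N m b :=
    { zero := by simp [hbdef]
      last := hsum
      lt := by
        intro j hj
        have := hlen1 j hj
        simp only [hbdef, Finset.sum_range_succ]
        omega }
  set σ : ℕ → ℝ := fun j => if 1 ≤ j ∧ j ≤ m then ∏ i ∈ Finset.range j, q (len i) else 0 with hσdef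
  have habs : ∀ j, |∏ i ∈ Finset.range j, q (len i)| = 1 := by
    intro j
    rw [Finset.abs_prod]
    exact Finset.prod_eq_one fun i _ => hq1 _
  have hmain := blocks_le_supRisk η hmeas hmin N ε L τ hτ m b hb
    (fun j hj => by rw [hbs]; exact hlen j hj) hm σ (by simp [hσdef]) (by simp [hσdef])
    (fun j hj => by
      simp only [hσdef]
      rw [if_pos ⟨by omega, by omega⟩]
      exact habs _)
  refine le_trans ?_ hmain
  have hle : m + 1 = 1 + (m - 1) + (m + 1 - (1 + (m - 1))) := by omega
  rw [hle, Finset.sum_range_add, Finset.sum_range_add]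
  refine le_trans (le_trans ?_ le_add_self) le_self_add
  refine Finset.sum_le_sum fun j hj => ?_
  have hj' : j < m - 1 := by simpa using hj
  rw [hbs]
  have e1 : σ (1 + j) = ∏ i ∈ Finset.range (1 + j), q (len i) := by
    simp only [hσdef]
    rw [if_pos ⟨by omega, by omega⟩]
  have e2 : σ (1 + j + 1) = σ (1 + j) * q (len (1 + j)) := by
    rw [e1, ← Finset.prod_range_succ]
    simp only [hσdef]
    rw [if_pos ⟨by omega, by omega⟩]
  rw [e2, ← hq2]
  have h1 : |σ (1 + j)| = 1 := by rw [e1]; exact habs _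
  rcases eq_or_eq_neg_of_abs_eq h1 with h | h
  · rw [h, one_mul]
  · rw [h, ← tvRiskZero_neg η hmeas hmin (1, -q (len (1 + j))) _ _ hτ]
    apply le_of_eq
    congr 1
    ext <;> simp

lemma config_le_supRisk (hmeas : ∀ s N τ, Measurable (η s N τ))
    (hmin : ∀ (s : ℝ × ℝ) (N : ℕ) (τ : ℝ), 0 ≤ τ → ∀ y x : Fin N → ℝ,
      tvObj s N τ y (η s N τ y) ≤ tvObj s N τ y x)
    (N : ℕ) (ε : ℝ) (L : ℕ) (hL : 1 ≤ L) (τ : ℝ) (hτ : 0 ≤ τ) (l1 l2 n1 n2 : ℕ)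
    (h11 : 1 ≤ l1) (h1L : l1 ≤ L) (h21 : 1 ≤ l2) (h2L : l2 ≤ L)
    (hN : n1 * l1 + n2 * l2 + 2 * L ≤ N)
    (hm : (n1 : ℝ) * (L - l1) + n2 * (L - l2) + N ≤ N * ε * L) :
    ENNReal.ofReal (n1 * rr η l1 τ + n2 * rr η l2 τ) ≤ supRisk η N ε L τ := by
  set F := N - (n1 * l1 + n2 * l2) with hF
  set g := (F - 1) / L with hg
  set r := (F - 1) % L + 1 with hr
  have hF2 : 2 * L ≤ F := by omega
  have hFr : L * g + r = F := by
    have := Nat.div_add_mod (F - 1) L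
    rw [hr, hg]
    omega
  have hrL : r ≤ L := by
    have := Nat.mod_lt (F - 1) hL
    omega
  have hg1 : 1 ≤ g := by
    rw [hg, Nat.le_div_iff_mul_le hL]
    omega
  set len : ℕ → ℕ := fun j => if j = 0 then r else if j < 1 + n1 then l1 else
    if j < 1 + n1 + n2 then l2 else L with hlen
  have e0 : len 0 = r := by simp [hlen]
  have e1 : ∀ j < n1, len (1 + j) = l1 := by
    intro j hj
    simp only [hlen]
    rw [if_neg (by omega), if_pos (by omega)]
  have e2 : ∀ j < n2, len (1 + n1 + j) = l2 := by
    intro j hj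
    simp only [hlen]
    rw [if_neg (by omega), if_neg (by omega), if_pos (by omega)]
  have e3 : ∀ j, len (1 + n1 + n2 + j) = L := by
    intro j
    simp only [hlen]
    rw [if_neg (by omega), if_neg (by omega), if_neg (by omega)]
  have hmain := len_le_supRisk η hmeas hmin N ε L τ hτ (n1 + n2 + g) len
    (by intro j _; simp only [hlen]; split_ifs <;> omega)
    (by intro j _; simp only [hlen]; split_ifs <;> omega)
    (by
      rw [show n1 + n2 + g + 1 = 1 + n1 + n2 + g by omega, Finset.sum_range_add,
        Finset.sum_range_add, Finset.sum_range_add, Finset.sum_range_one, e0,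
        Finset.sum_congr rfl (fun j hj => e1 j (Finset.mem_range.1 hj)),
        Finset.sum_congr rfl (fun j hj => e2 j (Finset.mem_range.1 hj)),
        Finset.sum_congr rfl (fun j _ => e3 j)]
      simp only [Finset.sum_const, Finset.card_range, smul_eq_mul]
      rw [mul_comm g L]
      omega)
    (by
      have hLpos : (0 : ℝ) < L := by exact_mod_cast hL
      have h1 : L * g + (n1 * l1 + n2 * l2) ≤ N := by omega
      have h2 : (L : ℝ) * g + (n1 * l1 + n2 * l2) ≤ N := by exact_mod_cast h1
      push_cast
      refine le_of_mul_le_mul_right ?_ hLpos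
      linarith)
  refine le_trans ?_ hmain
  rw [show n1 + n2 + g - 1 = n1 + n2 + (g - 1) by omega, Finset.sum_range_add, Finset.sum_range_add,
    Finset.sum_congr rfl (fun j hj => by rw [e1 j (Finset.mem_range.1 hj)]),
    Finset.sum_congr (s₁ := Finset.range n2) rfl
      (fun j hj => by rw [← add_assoc, e2 j (Finset.mem_range.1 hj)])]
  refine le_trans (le_of_eq ?_) le_self_add
  have := rr_nonneg η l1 τ
  have := rr_nonneg η l2 τ
  rw [ENNReal.ofReal_add (by positivity) (by positivity), ENNReal.ofReal_mul (by positivity),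
    ENNReal.ofReal_mul (by positivity)]
  simp

lemma floor_eventually (c : ℝ) (hc : c < 1) (ε : ℝ) (hε : 0 < ε) (L : ℕ) (p : ℝ) (hp : 0 ≤ p) :
    ∀ᶠ N : ℕ in atTop, c * N * ε * p ≤ ⌊((N : ℝ) - 2 * L) * ε * p⌋₊ := by
  rcases hp.eq_or_lt with rfl | hp
  · simp
  · have hd : 0 < (1 - c) * ε * p := by
      have : 0 < 1 - c := by linarith
      positivity
    filter_upwards [eventually_ge_atTop ⌈(1 + 2 * L * ε * p) / ((1 - c) * ε * p)⌉₊] with N hN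
    have h1 : (1 + 2 * L * ε * p) / ((1 - c) * ε * p) ≤ N :=
      (Nat.le_ceil _).trans (by exact_mod_cast hN)
    rw [div_le_iff₀ hd] at h1
    have h2 := Nat.lt_floor_add_one (((N : ℝ) - 2 * L) * ε * p)
    linarith

lemma lower_eventually (hmeas : ∀ s N τ, Measurable (η s N τ))
    (hmin : ∀ (s : ℝ × ℝ) (N : ℕ) (τ : ℝ), 0 ≤ τ → ∀ y x : Fin N → ℝ,
      tvObj s N τ y (η s N τ y) ≤ tvObj s N τ y x)
    (ε : ℝ) (hε0 : 0 < ε) (hε1 : ε < 1) (L : ℕ) (hL : 1 / ε ≤ L) (c : ℝ) (hc0 : 0 < c)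
    (hc : c < 1) :
    ∀ᶠ N : ℕ in atTop, ∀ τ : ℝ, 0 ≤ τ →
      ENNReal.ofReal (c * N) * tvInner η ε L τ ≤ supRisk η N ε L τ := by
  have hμ1 : 1 < 1 / ε := by rw [lt_div_iff₀ hε0]; linarith
  have hL1 : 1 ≤ L := by
    have : (1 : ℝ) < L := lt_of_lt_of_le hμ1 hL
    exact_mod_cast this.le
  have hev : ∀ p : ℝ, ∀ᶠ N : ℕ in atTop, 0 ≤ p →
      c * N * ε * p ≤ ⌊((N : ℝ) - 2 * L) * ε * p⌋₊ := by
    intro p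
    by_cases hp : 0 ≤ p
    · filter_upwards [floor_eventually c hc ε hε0 L p hp] with N hN _ using hN
    · exact Eventually.of_forall fun N h => absurd h hp
  set P : ℕ → ℕ → ℝ := fun l1 l2 => ((l2 : ℝ) - 1 / ε) / (l2 - l1) with hP
  have hall : ∀ᶠ N : ℕ in atTop, ∀ l1 ∈ Finset.range (L + 1), ∀ l2 ∈ Finset.range (L + 1),
      (0 ≤ P l1 l2 → c * N * ε * P l1 l2 ≤ ⌊((N : ℝ) - 2 * L) * ε * P l1 l2⌋₊) ∧
      (0 ≤ 1 - P l1 l2 → c * N * ε * (1 - P l1 l2) ≤ ⌊((N : ℝ) - 2 * L) * ε * (1 - P l1 l2)⌋₊) := by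
    rw [Filter.eventually_all_finset]
    intro l1 _
    rw [Filter.eventually_all_finset]
    intro l2 _
    exact (hev _).and (hev _)
  filter_upwards [hall, hev 1, hev 0, eventually_ge_atTop (2 * L)] with N hN hN1 hN0 hNL τ hτ
  by_cases hS : supRisk η N ε L τ = ⊤
  · rw [hS]; exact le_top
  have hNpos : (0 : ℝ) < N := by
    have : 0 < N := by omega
    exact_mod_cast this
  have hNL' : (2 * L : ℝ) ≤ N := by exact_mod_cast hNL
  set S := (supRisk η N ε L τ).toReal with hSdef
  have hd : 0 < c * N * ε := by positivity
  obtain ⟨A, B, hABh, hAB⟩ := exists_dual η hmin ε hε0 hε1 L hL τ hτ (S / (c * N * ε)) (by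
    intro l1 l2 p1 p2 h11 h1L h21 h2L hp1 hp2 hcase hp hm
    have hfl : c * N * ε * p1 ≤ ⌊((N : ℝ) - 2 * L) * ε * p1⌋₊ ∧
        c * N * ε * p2 ≤ ⌊((N : ℝ) - 2 * L) * ε * p2⌋₊ := by
      rcases hcase with ⟨_, _, h⟩ | ⟨_, h⟩
      · have h2 : p2 = 1 - P l1 l2 := by rw [hP]; linarith
        have h1 : p1 = P l1 l2 := h
        obtain ⟨ha, hb⟩ := hN l1 (by simp; omega) l2 (by simp; omega)
        rw [← h1] at ha hb
        rw [← h1] at h2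
        rw [← h2] at hb
        exact ⟨ha hp1, hb hp2⟩
      · have h2 : p2 = 0 := by linarith
        rw [h, h2]
        exact ⟨hN1 zero_le_one, hN0 le_rfl⟩
    set n1 := ⌊((N : ℝ) - 2 * L) * ε * p1⌋₊ with hn1
    set n2 := ⌊((N : ℝ) - 2 * L) * ε * p2⌋₊ with hn2
    have hNn : 0 ≤ (N : ℝ) - 2 * L := by linarith
    have hu1 : (n1 : ℝ) ≤ ((N : ℝ) - 2 * L) * ε * p1 := Nat.floor_le (by positivity)
    have hu2 : (n2 : ℝ) ≤ ((N : ℝ) - 2 * L) * ε * p2 := Nat.floor_le (by positivity)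
    have hεm : ε * (p1 * l1 + p2 * l2) = 1 := by rw [hm]; field_simp
    have hlow := config_le_supRisk η hmeas hmin N ε L hL1 τ hτ l1 l2 n1 n2 h11 h1L h21 h2L
      (by
        have h1 : (n1 : ℝ) * l1 ≤ ((N : ℝ) - 2 * L) * ε * p1 * l1 := by gcongr
        have h2 : (n2 : ℝ) * l2 ≤ ((N : ℝ) - 2 * L) * ε * p2 * l2 := by gcongr
        have h3 : ((N : ℝ) - 2 * L) * ε * p1 * l1 + ((N : ℝ) - 2 * L) * ε * p2 * l2 =
          ((N : ℝ) - 2 * L) * (ε * (p1 * l1 + p2 * l2)) := by ring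
        rw [hεm] at h3
        have h4 : (n1 : ℝ) * l1 + n2 * l2 + 2 * L ≤ N := by linarith
        exact_mod_cast h4)
      (by
        have hl1 : (0 : ℝ) ≤ L - l1 := by
          have : (l1 : ℝ) ≤ L := by exact_mod_cast h1L
          linarith
        have hl2 : (0 : ℝ) ≤ L - l2 := by
          have : (l2 : ℝ) ≤ L := by exact_mod_cast h2L
          linarith
        have k1 : (n1 : ℝ) ≤ N * ε * p1 := hu1.trans (by
          gcongr
          have : (0 : ℝ) ≤ L := Nat.cast_nonneg _
          linarith)
        have k2 : (n2 : ℝ) ≤ N * ε * p2 := hu2.trans (by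
          gcongr
          have : (0 : ℝ) ≤ L := Nat.cast_nonneg _
          linarith)
        have h1 : (n1 : ℝ) * (L - l1) ≤ N * ε * p1 * (L - l1) := by gcongr
        have h2 : (n2 : ℝ) * (L - l2) ≤ N * ε * p2 * (L - l2) := by gcongr
        have h3 : N * ε * p1 * (L - l1) + N * ε * p2 * (L - l2) =
          N * ε * L * (p1 + p2) - N * (ε * (p1 * l1 + p2 * l2)) := by ring
        rw [hεm, hp] at h3
        linarith)
    rw [ENNReal.ofReal_le_iff_le_toReal hS] at hlow
    rw [le_div_iff₀ hd]
    have r1 := rr_nonneg η l1 τ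
    have r2 := rr_nonneg η l2 τ
    have g1 := mul_le_mul_of_nonneg_right hfl.1 r1
    have g2 := mul_le_mul_of_nonneg_right hfl.2 r2
    rw [hSdef]
    linarith)
  have h := tvInner_le η hmin ε hε0 L τ hτ A B hAB
  rw [hABh] at h
  have hcN : 0 < c * N := by positivity
  calc _ ≤ ENNReal.ofReal (c * N) * ENNReal.ofReal (ε * (S / (c * N * ε))) := by gcongr
    _ = ENNReal.ofReal S := by
      rw [← ENNReal.ofReal_mul hcN.le]
      congr 1
      field_simp
    _ = _ := ENNReal.ofReal_toReal hS

lemma tendsto_feasible (hmeas : ∀ s N τ, Measurable (η s N τ))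
    (hmin : ∀ (s : ℝ × ℝ) (N : ℕ) (τ : ℝ), 0 ≤ τ → ∀ y x : Fin N → ℝ,
      tvObj s N τ y (η s N τ y) ≤ tvObj s N τ y x)
    (ε : ℝ) (hε0 : 0 < ε) (hε1 : ε < 1) (L : ℕ) (hL : 1 / ε ≤ L) :
    Tendsto (fun N : ℕ => tvMSE η N ε L) atTop (nhds (tvLimitVal η ε L)) := by
  have hVfin : tvLimitVal η ε L ≠ ⊤ := by
    rw [tvLimitVal_eq]
    exact ne_top_of_le_ne_top ENNReal.ofReal_ne_top
      ((iInf₂_le 0 le_rfl).trans (tvInner_le_top η hmin ε hε0 L 0 le_rfl))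
  rw [tendsto_order]
  constructor
  · intro a ha
    have hafin : a ≠ ⊤ := ha.ne_top
    set V := (tvLimitVal η ε L).toReal with hV
    have haV : a.toReal < V := (ENNReal.toReal_lt_toReal hafin hVfin).2 ha
    have ha0 : 0 ≤ a.toReal := ENNReal.toReal_nonneg
    have hVpos : 0 < V := by linarith
    have hc0 : 0 < (a.toReal + V) / (2 * V) := by positivity
    have hc1 : (a.toReal + V) / (2 * V) < 1 := by
      rw [div_lt_one (by positivity)]; linarith
    filter_upwards [lower_eventually η hmeas hmin ε hε0 hε1 L hL _ hc0 hc1,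
      eventually_ge_atTop 1] with N hN hN1
    have hNpos : (0 : ℝ) < N := by exact_mod_cast hN1
    have h1 : ENNReal.ofReal ((a.toReal + V) / (2 * V) * N) * tvLimitVal η ε L ≤
        ⨅ (τ : ℝ) (_ : 0 ≤ τ), supRisk η N ε L τ := by
      refine le_iInf₂ fun τ hτ => le_trans ?_ (hN τ hτ)
      rw [tvLimitVal_eq]
      exact mul_le_mul' le_rfl (iInf₂_le τ hτ)
    have h2 : tvMSE η N ε L = (N : ℝ≥0∞)⁻¹ * ⨅ (τ : ℝ) (_ : 0 ≤ τ), supRisk η N ε L τ := rfl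
    rw [h2]
    refine lt_of_lt_of_le ?_ (mul_le_mul' le_rfl h1)
    rw [← ENNReal.ofReal_toReal hVfin, ← ENNReal.ofReal_natCast, ← ENNReal.ofReal_inv_of_pos hNpos,
      ← ENNReal.ofReal_mul (by positivity), ← ENNReal.ofReal_mul (by positivity), ← hV]
    have e : (N : ℝ)⁻¹ * ((a.toReal + V) / (2 * V) * N * V) = (a.toReal + V) / 2 := by
      field_simp
    rw [e, ENNReal.lt_ofReal_iff_toReal_lt hafin]
    linarith
  · intro a ha
    rw [tvLimitVal_eq] at ha
    simp only [iInf_lt_iff] at ha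
    obtain ⟨τ, hτ, ha⟩ := ha
    obtain ⟨C, hC⟩ := tvMSE_upper η hmeas hmin ε hε0 hε1 L hL τ hτ
    have ht : Tendsto (fun N : ℕ => ENNReal.ofReal ((tvInner η ε L τ).toReal + C / N)) atTop
        (nhds (tvInner η ε L τ)) := by
      have h1 : Tendsto (fun N : ℕ => (tvInner η ε L τ).toReal + C / N) atTop
          (nhds ((tvInner η ε L τ).toReal + 0)) :=
        tendsto_const_nhds.add (tendsto_const_div_atTop_nhds_zero_nat C)
      have h2 := ENNReal.tendsto_ofReal h1
      rwa [add_zero, ENNReal.ofReal_toReal (ne_top_of_le_ne_top ENNReal.ofReal_ne_top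
        (tvInner_le_top η hmin ε hε0 L τ hτ))] at h2
    filter_upwards [(tendsto_order.1 ht).2 a ha, eventually_ge_atTop 1] with N hN hN1
    exact (hC N hN1).trans_lt hN
end

/-- **Asymptotic minimax MSE of total variation denoising.**
Let `η s ℓ τ` be, for each boundary sign pair `s`, dimension `ℓ` and `τ ≥ 0`,
the minimizer of `½‖y − x‖₂² + τ‖x‖_TV + τ(s₁x₁ + s₂x_ℓ)`.  Then for
`ε ∈ (0,1)` and `L ≥ 1` the limit `M_L(ε|TV) = lim_N M(F_{N,ε,TV}(L)|TV)`
exists and equals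
`inf_{τ≥0} max_π { ε Σ_{ℓ≤L, s∈{++,+−}} π_{ℓ,s} r_s(ℓ;τ) : Σ ℓ π_{ℓ,s} = 1/ε }`. -/
theorem tv_minimax
    (η : (ℝ × ℝ) → ∀ N : ℕ, ℝ → (Fin N → ℝ) → (Fin N → ℝ))
    (hmeas : ∀ s N τ, Measurable (η s N τ))
    (hmin : ∀ (s : ℝ × ℝ) (N : ℕ) (τ : ℝ), 0 ≤ τ → ∀ y x : Fin N → ℝ,
      tvObj s N τ y (η s N τ y) ≤ tvObj s N τ y x)
    (ε : ℝ) (hε0 : 0 < ε) (hε1 : ε < 1) (L : ℕ) (hL : 1 ≤ L) :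
    Tendsto (fun N : ℕ => tvMSE η N ε L) atTop (nhds (tvLimitVal η ε L)) := by
  rcases le_or_gt (1 / ε) (L : ℝ) with h | h
  · exact tendsto_feasible η hmeas hmin ε hε0 hε1 L h
  · exact tendsto_infeasible η ε hε0 L h
end
end
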